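/- arXiv:0712.2559 — 2 statements merged into one kernel-verified Lean document; each statement's English description precedes it below -/
import Mathlib

section
/- Let $\mathbb{R}_{\max}=\mathbb{R}\cup\{-\infty\}$, and for a $d\times d$ matrix $M$ and a vector $v$ over $\mathbb{R}_{\max}$ put $(M\otimes v)_i=\max_j(M_{ij}+v_j)$. Let $(A(n))_{n\in\mathbb{Z}}$ be a stationary and ergodic sequence of random $d\times d$ matrices with entries in $\mathbb{R}_{\max}$, almost surely having at least one finite entry on each row, such that the positive part of $\max_{ij}A_{ij}(0)$ is integrable. Let $0$ denote the zero vector and put $y(n,0):=A(-1)\otimes\cdots\otimes A(-n)\otimes 0$. Let $\mathcal{G}(A)$ be the directed graph on $\{1,\dots,d\}$ with an arc $(i,j)$ whenever $\mathbb{P}(A_{ij}(0)\neq-\infty)>0$. Its strongly connected components are the classes of mutually reachable nodes, every node being reachable from itself (so a node lying on no circuit is alone in its component). Write $i\to c$ if $i\in c$ or there is a path in $\mathcal{G}(A)$ from $i$ to a node of the component $c$. For each strongly connected component $c$ put $A^{(c)}(n):=(A_{ij}(n))_{i,j\in c}$ and $x^{(c)}(n,0):=A^{(c)}(n-1)\otimes\cdots\otimes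 A^{(c)}(0)\otimes 0$, and let $\gamma^{(c)}\in\mathbb{R}\cup\{-\infty\}$ be the maximal Lyapunov exponent of $A^{(c)}$, that is, the constant to which $\frac1n\max_{i\in c}x^{(c)}_i(n,0)$ converges almost surely (this limit exists under the above hypotheses). If $\frac1n\,y(n,0)$ converges almost surely to a deterministic (almost surely constant) vector $L$, then for every $i\in\{1,\dots,d\}$, $$L_i=\max\{\gamma^{(c)} : c \text{ a strongly connected component of } \mathcal{G}(A) \text{ with } i\to c\}.$$ -/
open Filter MeasureTheory Topology

noncomputable section

/-- Square matrices over `ℝ_max = ℝ ∪ {-∞}`, with entries in `EReal`; `-∞` is `⊥`, and the value `⊤`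
is excluded by hypothesis wherever it matters. The σ-algebra is the product one. -/
abbrev MPMatrix (ι : Type*) := ι → ι → EReal

/-- Max-plus product of a matrix and a vector: `(M ⊗ v) i = max_j (M i j + v j)`. -/
def mpVec {ι : Type*} (M : MPMatrix ι) (v : ι → EReal) : ι → EReal :=
  fun i => ⨆ j, M i j + v j

/-- `mpOrbit a s n = a (s+n-1) ⊗ ⋯ ⊗ a (s+1) ⊗ a s ⊗ 0`. -/
def mpOrbit {ι : Type*} (a : ℤ → MPMatrix ι) (s : ℤ) : ℕ → ι → EReal
  | 0 => fun _ => 0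
  | n + 1 => mpVec (a (s + n)) (mpOrbit a s n)

/-- `x(n,0) = a (n-1) ⊗ ⋯ ⊗ a 0 ⊗ 0`. -/
def xVec {ι : Type*} (a : ℤ → MPMatrix ι) (n : ℕ) : ι → EReal := mpOrbit a 0 n

/-- `y(n,0) = a (-1) ⊗ ⋯ ⊗ a (-n) ⊗ 0`. -/
def yVec {ι : Type*} (a : ℤ → MPMatrix ι) (n : ℕ) : ι → EReal := mpOrbit a (-(n : ℤ)) n

/-- A two-sided random sequence is stationary and ergodic: its law on the sequence space is
invariant and ergodic under the shift. -/
def StationaryErgodic {Ω S : Type*} [MeasurableSpace Ω] [MeasurableSpace S]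
    (μ : Measure Ω) (X : ℤ → Ω → S) : Prop :=
  Ergodic (fun (s : ℤ → S) (n : ℤ) => s (n + 1)) (μ.map (fun ω n => X n ω))

/-- `g` is the almost sure limit of `(1/n) max_i x_i(n,0)`. -/
def IsMaxLyapunov {Ω ι : Type*} [MeasurableSpace Ω] (μ : Measure Ω)
    (A : ℤ → Ω → MPMatrix ι) (g : EReal) : Prop :=
  ∀ᵐ ω ∂μ, Tendsto (fun n : ℕ => (⨆ i, xVec (fun k => A k ω) n i) / (n : EReal)) atTop (𝓝 g)

open Classical in
/-- The maximal Lyapunov exponent `γ(A)`: the constant which is the almost sure limit of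
`(1/n) max_i x_i(n,0)` (by convention `⊥` if there is no such constant). -/
def maxLyapunov {Ω ι : Type*} [MeasurableSpace Ω] (μ : Measure Ω)
    (A : ℤ → Ω → MPMatrix ι) : EReal :=
  if h : ∃ g, IsMaxLyapunov μ A g then h.choose else ⊥

/-- The submatrices `A^{(c)}(n) = (A_{ij}(n))_{i,j ∈ c}`. -/
def subMatrix {Ω ι : Type*} (A : ℤ → Ω → MPMatrix ι) (c : Set ι) : ℤ → Ω → MPMatrix c :=
  fun n ω i j => A n ω i j

/-- Arcs of the graph `𝒢(A)`. -/
def arcRel {Ω ι : Type*} [MeasurableSpace Ω] (μ : Measure Ω)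
    (A : ℤ → Ω → MPMatrix ι) (i j : ι) : Prop :=
  0 < μ {ω | A 0 ω i j ≠ ⊥}

/-- `c` is a strongly connected component of the graph with arcs `r`: the mutual-reachability class
of a node. Paths may have length zero, so a node on no circuit is alone in its class. -/
def IsSCC {ι : Type*} (r : ι → ι → Prop) (c : Set ι) : Prop :=
  ∃ i, c = {j | Relation.ReflTransGen r i j ∧ Relation.ReflTransGen r j i}

/-- `i → c`: `i ∈ c`, or there is a path from `i` to a node of `c`. -/
def Reaches {ι : Type*} (r : ι → ι → Prop) (i : ι) (c : Set ι) : Prop :=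
  ∃ j ∈ c, Relation.ReflTransGen r i j

end

section BirkhoffUpper

variable {X : Type*} {T : X → X}

/-- `partialMax T f n x` is the maximum of the Birkhoff sums of `f` of lengths `1, …, n + 1`. -/
def partialMax (T : X → X) (f : X → ℝ) : ℕ → X → ℝ
  | 0 => f
  | n + 1 => fun x => f x + max 0 (partialMax T f n (T x))

theorem birkhoffSum_succ_le_partialMax (f : X → ℝ) (n : ℕ) (x : X) :
    birkhoffSum T f (n + 1) x ≤ partialMax T f n x := by
  induction n generalizing x with
  | zero => simp [partialMax]
  | succ n ih =>
    rw [birkhoffSum_succ']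
    exact add_le_add le_rfl ((ih _).trans (le_max_right _ _))

theorem partialMax_le_succ (f : X → ℝ) (n : ℕ) (x : X) :
    partialMax T f n x ≤ partialMax T f (n + 1) x := by
  induction n generalizing x with
  | zero => simp [partialMax]
  | succ n ih => exact add_le_add le_rfl (max_le_max le_rfl (ih _))

theorem monotone_partialMax (f : X → ℝ) (x : X) : Monotone fun n => partialMax T f n x :=
  monotone_nat_of_le_succ fun n => partialMax_le_succ f n x

theorem bddAbove_partialMax_comp_iff (f : X → ℝ) (x : X) :
    BddAbove (Set.range fun n => partialMax T f n (T x)) ↔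
      BddAbove (Set.range fun n => partialMax T f n x) := by
  constructor
  · rintro ⟨C, hC⟩
    refine ⟨f x + max 0 C, ?_⟩
    rintro _ ⟨n, rfl⟩
    refine (partialMax_le_succ f n x).trans (add_le_add le_rfl (max_le_max le_rfl ?_))
    exact hC ⟨n, rfl⟩
  · rintro ⟨C, hC⟩
    refine ⟨C - f x, ?_⟩
    rintro _ ⟨n, rfl⟩
    have h : f x + max 0 (partialMax T f n (T x)) ≤ C := hC ⟨n + 1, rfl⟩
    have := le_max_right 0 (partialMax T f n (T x))
    simp only
    linarith

theorem birkhoffSum_mono_length {f : X → ℝ} (hf : ∀ x, 0 ≤ f x) (x : X) {l m n : ℕ}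
    (h : l + m ≤ n) : birkhoffSum T f m (T^[l] x) ≤ birkhoffSum T f n x := by
  obtain ⟨k, rfl⟩ := Nat.exists_eq_add_of_le h
  have h0 : ∀ n x, 0 ≤ birkhoffSum T f n x := fun n x => Finset.sum_nonneg fun _ _ => hf _
  rw [birkhoffSum_add, birkhoffSum_add]
  linarith [h0 l x, h0 k (T^[l + m] x)]

variable [MeasurableSpace X] {ν : Measure X}

theorem measurable_partialMax {f : X → ℝ} (hT : Measurable T) (hf : Measurable f) (n : ℕ) :
    Measurable (partialMax T f n) := by
  induction n with
  | zero => exact hf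
  | succ n ih => exact hf.add (measurable_const.max (ih.comp hT))

theorem integrable_partialMax {f : X → ℝ} (hT : MeasurePreserving T ν ν)
    (hf : Integrable f ν) (n : ℕ) : Integrable (partialMax T f n) ν := by
  induction n with
  | zero => exact hf
  | succ n ih =>
    exact hf.add ((integrable_zero _ _ _).sup (hT.integrable_comp_of_integrable ih))

theorem ae_bddAbove_partialMax [IsProbabilityMeasure ν] (hT : Ergodic T ν) {f : X → ℝ}
    (hfm : Measurable f) (hf : Integrable f ν) (hneg : ∫ x, f x ∂ν < 0) :
    ∀ᵐ x ∂ν, BddAbove (Set.range fun n => partialMax T f n x) := by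
  have hmp := hT.toMeasurePreserving
  rcases hT.toPreErgodic.ae_mem_or_ae_notMem
    (measurableSet_bddAbove_range fun n => measurable_partialMax hmp.measurable hfm n)
    (Set.ext fun x => bddAbove_partialMax_comp_iff f x) with h | h
  · exact h
  exfalso
  have hTh : ∀ᵐ x ∂ν, ¬ BddAbove (Set.range fun n => partialMax T f n (T x)) :=
    hmp.quasiMeasurePreserving.ae h
  have hint n := integrable_partialMax hmp hf n
  have hlim : Tendsto (fun n => ∫ x, (partialMax T f (n + 1) x - partialMax T f n (T x)) ∂ν) atTop
      (𝓝 (∫ x, f x ∂ν)) := by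
    refine tendsto_integral_of_dominated_convergence (fun x => |f x| + |f (T x)|) (fun n => ?_) ?_
      (fun n => ae_of_all _ fun x => ?_) ?_
    · exact ((hint (n + 1)).sub (hmp.integrable_comp_of_integrable (hint n))).aestronglyMeasurable
    · exact hf.abs.add (hmp.integrable_comp_of_integrable hf.abs)
    · have h0 : f (T x) ≤ partialMax T f n (T x) := monotone_partialMax f (T x) (Nat.zero_le n)
      simp only [partialMax, Real.norm_eq_abs]
      have h1 := neg_abs_le (f (T x))
      have h2 := abs_nonneg (f (T x))
      have : |max 0 (partialMax T f n (T x)) - partialMax T f n (T x)| ≤ |f (T x)| := by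
        rcases le_total 0 (partialMax T f n (T x)) with h | h
        · simp [max_eq_right h]
        · rw [max_eq_left h, abs_le]; constructor <;> linarith
      calc _ = |f x + (max 0 (partialMax T f n (T x)) - partialMax T f n (T x))| := by ring_nf
        _ ≤ _ := (abs_add_le _ _).trans (by linarith)
    · filter_upwards [hTh] with x hx
      refine tendsto_const_nhds.congr' ?_
      have hx' : ∃ n, 0 ≤ partialMax T f n (T x) := by
        by_contra! hcon
        exact hx ⟨0, by rintro _ ⟨n, rfl⟩; exact (hcon n).le⟩
      obtain ⟨n₀, hn₀⟩ := hx'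
      filter_upwards [eventually_ge_atTop n₀] with n hn
      have := hn₀.trans (monotone_partialMax f (T x) hn)
      simp only [partialMax]
      rw [max_eq_right this]; ring
  refine absurd (ge_of_tendsto' hlim fun n => ?_) (not_le.2 hneg)
  rw [integral_sub (hint _) (g := fun x => partialMax T f n (T x))
    (hmp.integrable_comp_of_integrable (hint n))]
  have : ∫ x, partialMax T f n (T x) ∂ν = ∫ x, partialMax T f n x ∂ν := by
    have h2 := hmp.map_eq
    conv_rhs => rw [← h2]
    exact (integral_map hmp.measurable.aemeasurable
      (measurable_partialMax hmp.measurable hfm n).aestronglyMeasurable).symm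
  rw [this, sub_nonneg]
  exact integral_mono (hint n) (hint (n + 1)) fun x => partialMax_le_succ f n x

/-- The upper half of the pointwise ergodic theorem. -/
theorem ae_eventually_birkhoffSum_le [IsProbabilityMeasure ν] (hT : Ergodic T ν) {f : X → ℝ}
    (hfm : Measurable f) (hf : Integrable f ν) {c : ℝ} (hc : ∫ x, f x ∂ν < c) :
    ∀ᵐ x ∂ν, ∀ᶠ n : ℕ in atTop, birkhoffSum T f n x ≤ c * n := by
  obtain ⟨c', hc1, hc2⟩ := exists_between hc
  have h := ae_bddAbove_partialMax hT (f := fun x => f x - c') (hfm.sub measurable_const)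
    (hf.sub (integrable_const _)) (by rw [integral_sub hf (integrable_const _)]; simp; linarith)
  filter_upwards [h] with x ⟨C, hC⟩
  have hev : ∀ᶠ n : ℕ in atTop, C ≤ (c - c') * n :=
    (tendsto_natCast_atTop_atTop.const_mul_atTop (sub_pos.2 hc2)).eventually_ge_atTop C
  filter_upwards [hev, eventually_ge_atTop 1] with n hn h1
  obtain ⟨m, rfl⟩ := Nat.exists_eq_add_of_le' h1
  have h2 := (birkhoffSum_succ_le_partialMax (T := T) (fun x => f x - c') m x).trans (hC ⟨m, rfl⟩)
  have h3 : birkhoffSum T (fun x => f x - c') (m + 1) x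
      = birkhoffSum T f (m + 1) x - (m + 1 : ℕ) * c' := by
    simp [birkhoffSum, Finset.sum_sub_distrib]
  rw [h3] at h2
  nlinarith

theorem exists_integral_posPart_sub_lt {f : X → ℝ} (hfm : Measurable f)
    (hf : Integrable f ν) {ε : ℝ} (hε : 0 < ε) :
    ∃ K : ℝ, 0 ≤ K ∧ ∫ x, max (f x - K) 0 ∂ν < ε := by
  have hlim : Tendsto (fun n : ℕ => ∫ x, max (f x - n) 0 ∂ν) atTop (𝓝 (∫ _, (0 : ℝ) ∂ν)) := by
    refine tendsto_integral_of_dominated_convergence (fun x => |f x|) (fun n => ?_) hf.abs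
      (fun n => ae_of_all _ fun x => ?_) (ae_of_all _ fun x => ?_)
    · exact ((hfm.sub measurable_const).max measurable_const).aestronglyMeasurable
    · rw [Real.norm_eq_abs, abs_of_nonneg (le_max_right _ _)]
      have : (0 : ℝ) ≤ n := n.cast_nonneg
      exact max_le ((sub_le_self _ this).trans (le_abs_self _)) (abs_nonneg _)
    · refine tendsto_const_nhds.congr' ?_
      filter_upwards [tendsto_natCast_atTop_atTop.eventually_ge_atTop (f x)] with n hn
      exact (max_eq_right (sub_nonpos.2 hn)).symm
  rw [integral_zero] at hlim
  obtain ⟨n, hn⟩ := (hlim.eventually_lt_const hε).exists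
  exact ⟨n, n.cast_nonneg, hn⟩

/-- The values of an integrable function along an orbit grow sublinearly. -/
theorem ae_eventually_iterate_le [IsProbabilityMeasure ν] (hT : Ergodic T ν) {f : X → ℝ}
    (hfm : Measurable f) (hf : Integrable f ν) {ε : ℝ} (hε : 0 < ε) :
    ∀ᵐ x ∂ν, ∀ᶠ n : ℕ in atTop, ∀ m < n, f (T^[m] x) ≤ ε * n := by
  obtain ⟨K, -, hK⟩ := exists_integral_posPart_sub_lt hfm hf (half_pos hε)
  have h := ae_eventually_birkhoffSum_le hT (f := fun x => max (f x - K) 0)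
    ((hfm.sub measurable_const).max measurable_const)
    ((hf.sub (integrable_const K)).sup (integrable_zero _ _ _)) hK
  filter_upwards [h] with x hx
  have hev : ∀ᶠ n : ℕ in atTop, K ≤ ε / 2 * n :=
    (tendsto_natCast_atTop_atTop.const_mul_atTop (half_pos hε)).eventually_ge_atTop K
  filter_upwards [hx, hev] with n hn h2 m hm
  have h3 := birkhoffSum_mono_length (T := T) (f := fun x => max (f x - K) 0)
    (fun x => le_max_right _ _) x (l := m) (m := 1) (n := n) hm
  rw [birkhoffSum_one] at h3
  have := le_max_left (f (T^[m] x) - K) 0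
  linarith

end BirkhoffUpper

section Subadditive

variable {X : Type*} {T : X → X}

/-- `g` is a subadditive process over `T`. -/
structure SubadditiveProcess (T : X → X) (g : ℕ → X → EReal) : Prop where
  zero_le : ∀ x, g 0 x ≤ 0
  add_le : ∀ m n x, g (m + n) x ≤ g m x + g n (T^[m] x)

/-- Greedy covering of the orbit segment of length `m` by segments of length at most `N` along which
the process has slope at most `γ`, and by single points of `B` or close to the end. -/
theorem SubadditiveProcess.le_add_birkhoffSum {g : ℕ → X → EReal} (hg : SubadditiveProcess T g)
    {f F : X → ℝ} {γ K : ℝ} {N : ℕ} {B : Set X} (hK : 0 ≤ K) (hF : ∀ x, 0 ≤ F x)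
    (hFK : ∀ x, f x ≤ γ + K + F x) (hFB : ∀ x ∈ B, f x ≤ γ + F x)
    (hB : ∀ x ∉ B, ∃ l, 1 ≤ l ∧ l ≤ N ∧ g l x ≤ ((γ * l : ℝ) : EReal)) (m : ℕ) (x : X)
    (hx : ∀ k, g 1 (T^[k] x) ≤ (f (T^[k] x) : EReal)) :
    g m x ≤ ((γ * m + K * min (m : ℝ) N + birkhoffSum T F m x : ℝ) : EReal) := by
  induction m using Nat.strong_induction_on generalizing x with
  | _ m ih =>
  have hshift : ∀ l k, g 1 (T^[k] (T^[l] x)) ≤ (f (T^[k] (T^[l] x)) : EReal) := fun l k => by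
    rw [← Function.iterate_add_apply]; exact hx _
  rcases Nat.eq_zero_or_pos m with rfl | hm
  · simpa using hg.zero_le x
  by_cases hxB : m ≤ N ∨ x ∈ B
  · obtain ⟨k, rfl⟩ := Nat.exists_eq_add_of_le hm
    have h1 := hg.add_le 1 k x
    have h2 := ih k (by lia) (T^[1] x) (hshift 1)
    refine h1.trans ((add_le_add (hx 0) h2).trans ?_)
    rw [← EReal.coe_add, EReal.coe_le_coe_iff, birkhoffSum_add, birkhoffSum_one]
    simp only [Function.iterate_zero, id, Function.iterate_one]
    push_cast
    rcases hxB with h | h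
    · have h3 := hFK x
      have h4 : (1 + k : ℝ) ≤ N := by exact_mod_cast h
      rw [min_eq_left h4, min_eq_left (by linarith)]
      linarith
    · have h3 := hFB x h
      have h4 : min (k : ℝ) N ≤ min (1 + (k : ℝ)) N := min_le_min (by linarith) le_rfl
      have := mul_le_mul_of_nonneg_left h4 hK
      linarith
  · push Not at hxB
    obtain ⟨l, hl1, hlN, hl⟩ := hB x hxB.2
    obtain ⟨k, rfl⟩ := Nat.exists_eq_add_of_le (hlN.trans hxB.1.le)
    have h1 := hg.add_le l k x
    have h2 := ih k (by lia) (T^[l] x) (hshift l)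
    refine h1.trans ((add_le_add hl h2).trans ?_)
    rw [← EReal.coe_add, EReal.coe_le_coe_iff, birkhoffSum_add]
    have h3 : 0 ≤ birkhoffSum T F l x := Finset.sum_nonneg fun _ _ => hF _
    push_cast
    have h4 : min (k : ℝ) N ≤ min (l + (k : ℝ)) N :=
      min_le_min (by linarith [(l.cast_nonneg : (0 : ℝ) ≤ l)]) le_rfl
    have := mul_le_mul_of_nonneg_left h4 hK
    linarith

variable [MeasurableSpace X] {ν : Measure X}

theorem ae_iterate {p : X → Prop} (hT : MeasurePreserving T ν ν) (h : ∀ᵐ x ∂ν, p x) :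
    ∀ᵐ x ∂ν, ∀ k, p (T^[k] x) :=
  ae_all_iff.2 fun k => (hT.iterate k).quasiMeasurePreserving.ae h

/-- A subadditive process which almost surely has slope at most `γ` at some time is bounded by
`γ m + ε n`, uniformly over all segments of length `m` of the time interval of length `n`. -/
theorem SubadditiveProcess.ae_eventually_forall_le [IsProbabilityMeasure ν] (hT : Ergodic T ν)
    {g : ℕ → X → EReal} (hg : SubadditiveProcess T g) (hgm : ∀ n, Measurable (g n))
    {f : X → ℝ} (hfm : Measurable f) (hf : Integrable f ν) (hf0 : ∀ x, 0 ≤ f x)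
    (hgf : ∀ᵐ x ∂ν, g 1 x ≤ (f x : EReal)) {γ : ℝ}
    (hγ : ∀ᵐ x ∂ν, ∃ l : ℕ, 1 ≤ l ∧ g l x ≤ ((γ * l : ℝ) : EReal)) {ε : ℝ} (hε : 0 < ε) :
    ∀ᵐ x ∂ν, ∀ᶠ n : ℕ in atTop, ∀ l m, l + m ≤ n →
      g m (T^[l] x) ≤ ((γ * m + ε * n : ℝ) : EReal) := by
  set h : X → ℝ := fun x => f x + |γ|
  have hhm : Measurable h := hfm.add measurable_const
  have hh : Integrable h ν := hf.add (integrable_const _)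
  have hh0 : ∀ x, 0 ≤ h x := fun x => add_nonneg (hf0 x) (abs_nonneg _)
  set B : ℕ → Set X := fun N => {x | ∀ l : ℕ, 1 ≤ l → l ≤ N → ((γ * l : ℝ) : EReal) < g l x}
  have hBm : ∀ N, MeasurableSet (B N) := fun N => by
    simp only [B, Set.ofPred_forall]
    exact MeasurableSet.iInter fun l => MeasurableSet.iInter fun _ => MeasurableSet.iInter fun _ =>
      measurableSet_lt measurable_const (hgm l)
  obtain ⟨N, hN⟩ : ∃ N, ∫ x, (B N).indicator h x ∂ν < ε / 3 := by
    have hlim : Tendsto (fun N => ∫ x, (B N).indicator h x ∂ν) atTop (𝓝 (∫ _, (0 : ℝ) ∂ν)) := by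
      refine tendsto_integral_of_dominated_convergence h (fun n => ?_) hh
        (fun n => ae_of_all _ fun x => ?_) ?_
      · exact (hhm.indicator (hBm n)).aestronglyMeasurable
      · rw [Real.norm_eq_abs, abs_of_nonneg (Set.indicator_nonneg (fun x _ => hh0 x) x)]
        exact Set.indicator_le_self' (fun _ _ => hh0 _) x
      · filter_upwards [hγ] with x ⟨l, hl1, hl⟩
        refine tendsto_const_nhds.congr' ?_
        filter_upwards [eventually_ge_atTop l] with n hn
        rw [Set.indicator_of_notMem]
        exact fun hx => (hx l hl1 hn).not_ge hl
    rw [integral_zero] at hlim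
    exact (hlim.eventually_lt_const (by positivity)).exists
  obtain ⟨K, hK0, hK⟩ := exists_integral_posPart_sub_lt hhm hh (show 0 < ε / 3 by positivity)
  set F : X → ℝ := fun x => (B N).indicator h x + max (h x - K) 0
  have hi1 : Integrable ((B N).indicator h) ν := hh.indicator (hBm N)
  have hi2 : Integrable (fun x => max (h x - K) 0) ν :=
    (hh.sub (integrable_const K)).sup (integrable_zero _ _ _)
  have hFm : Measurable F :=
    (hhm.indicator (hBm N)).add ((hhm.sub measurable_const).max measurable_const)
  have hFint : ∫ x, F x ∂ν < 2 * ε / 3 := by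
    rw [integral_add hi1 hi2]; linarith
  have hind : ∀ x, 0 ≤ (B N).indicator h x := fun x => Set.indicator_nonneg (fun x _ => hh0 x) x
  have hF0 : ∀ x, 0 ≤ F x := fun x => add_nonneg (hind x) (le_max_right _ _)
  filter_upwards [ae_eventually_birkhoffSum_le hT hFm (hi1.add hi2) hFint,
    ae_iterate hT.toMeasurePreserving hgf] with x hx hxf
  have hev : ∀ᶠ n : ℕ in atTop, K * N ≤ ε / 3 * n :=
    (tendsto_natCast_atTop_atTop.const_mul_atTop (by positivity)).eventually_ge_atTop _
  filter_upwards [hx, hev] with n hn h2 l m hlm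
  refine (hg.le_add_birkhoffSum (f := f) (F := F) (γ := γ) (B := B N) (N := N) hK0 hF0
    (fun y => ?_) (fun y hy => ?_) (fun y hy => ?_) m (T^[l] x) (fun k => ?_)).trans ?_
  · have h1 := le_max_left (h y - K) 0
    have h3 := hind y
    have h4 := neg_abs_le γ
    simp only [F, h] at *
    linarith
  · have h1 := le_max_right (h y - K) 0
    have h4 := neg_abs_le γ
    simp only [F, Set.indicator_of_mem hy]
    simp only [h] at *
    linarith
  · simp only [B, Set.mem_ofPred_eq, not_forall, not_lt] at hy
    obtain ⟨l, h1, h3, h4⟩ := hy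
    exact ⟨l, h1, h3, h4⟩
  · rw [← Function.iterate_add_apply]; exact hxf _
  · rw [EReal.coe_le_coe_iff]
    have h3 := birkhoffSum_mono_length (T := T) hF0 x hlm
    have h4 := mul_le_mul_of_nonneg_left (min_le_right (m : ℝ) N) hK0
    linarith

theorem EReal.div_natCast_le_coe_iff {a : EReal} {n : ℕ} (hn : 1 ≤ n) (c : ℝ) :
    a / (n : EReal) ≤ c ↔ a ≤ ((c * n : ℝ) : EReal) := by
  rw [EReal.div_le_iff_le_mul (by exact_mod_cast hn) (EReal.natCast_ne_top n), mul_comm]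
  norm_cast

theorem EReal.coe_le_div_natCast_iff {a : EReal} {n : ℕ} (hn : 1 ≤ n) (c : ℝ) :
    c ≤ a / (n : EReal) ↔ ((c * n : ℝ) : EReal) ≤ a := by
  rw [EReal.le_div_iff_mul_le (by exact_mod_cast hn) (EReal.natCast_ne_top n)]
  norm_cast

/-- A measurable function which does not decrease along orbits of an ergodic map is almost surely
constant. -/
theorem Ergodic.exists_ae_eq_const_of_le_comp [IsProbabilityMeasure ν] (hT : Ergodic T ν)
    {φ : X → EReal} (hφ : Measurable φ) (hle : ∀ᵐ x ∂ν, φ x ≤ φ (T x)) :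
    ∃ γ, ∀ᵐ x ∂ν, φ x = γ := by
  refine ⟨essSup φ ν, ?_⟩
  have h2 : ∀ q : ℚ, ((q : ℝ) : EReal) < essSup φ ν → ∀ᵐ x ∂ν, ((q : ℝ) : EReal) < φ x := by
    intro q hq
    have hm : MeasurableSet {x | ((q : ℝ) : EReal) < φ x} := measurableSet_lt measurable_const hφ
    rcases hT.ae_empty_or_univ_of_ae_le_preimage hm.nullMeasurableSet
      (by filter_upwards [hle] with x hx h using lt_of_lt_of_le h hx)
      with h | h
    · refine absurd (essSup_le_of_ae_le ((q : ℝ) : EReal) ?_) hq.not_ge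
      filter_upwards [h.mem_iff] with x hx
      exact not_lt.1 fun h' => (hx.1 h' : x ∈ (∅ : Set X))
    · filter_upwards [h.mem_iff] with x hx
      exact hx.2 trivial
  have h4 : ∀ᵐ x ∂ν, ∀ q : ℚ, ((q : ℝ) : EReal) < essSup φ ν → ((q : ℝ) : EReal) < φ x :=
    ae_all_iff.2 fun q => eventually_imp_distrib_left.2 (h2 q)
  filter_upwards [ae_le_essSup (μ := ν) (f := φ), h4] with x h1 h3
  refine le_antisymm h1 (le_of_forall_lt fun c hc => ?_)
  obtain ⟨q, hq1, hq2⟩ := EReal.lt_iff_exists_rat_btwn.1 hc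
  exact hq1.trans (h3 q hq2)

/-- Kingman's theorem for an ergodic subadditive process with values in `ℝ ∪ {-∞}`, together with
the fact that the limit is not `+∞`. -/
theorem SubadditiveProcess.exists_ae_tendsto [IsProbabilityMeasure ν] (hT : Ergodic T ν)
    {g : ℕ → X → EReal} (hg : SubadditiveProcess T g) (hgm : ∀ n, Measurable (g n))
    {f : X → ℝ} (hfm : Measurable f) (hf : Integrable f ν) (hf0 : ∀ x, 0 ≤ f x)
    (hgf : ∀ᵐ x ∂ν, g 1 x ≤ (f x : EReal)) :
    ∃ γ : EReal, γ ≠ ⊤ ∧ ∀ᵐ x ∂ν, Tendsto (fun n : ℕ => g n x / (n : EReal)) atTop (𝓝 γ) := by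
  set φ : X → EReal := fun x => liminf (fun n : ℕ => g n x / (n : EReal)) atTop
  have hφm : Measurable φ := Measurable.liminf fun n => (hgm n).mul measurable_const
  have hTm := hT.toMeasurePreserving
  have hmono : ∀ᵐ x ∂ν, φ x ≤ φ (T x) := by
    filter_upwards [hgf] with x hx
    refine le_of_forall_gt fun c hc => ?_
    obtain ⟨q, hq1, hq2⟩ := EReal.lt_iff_exists_real_btwn.1 hc
    obtain ⟨r, hr1, hr2⟩ := EReal.lt_iff_exists_real_btwn.1 hq1
    have hrq : r < q := by exact_mod_cast hr2
    have hev : ∀ᶠ n : ℕ in atTop, f x - q ≤ (q - r) * n :=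
      (tendsto_natCast_atTop_atTop.const_mul_atTop (sub_pos.2 hrq)).eventually_ge_atTop _
    have hfr := ((frequently_lt_of_liminf_lt (by isBoundedDefault) hr1).and_eventually
      (hev.and (eventually_ge_atTop 1)))
    refine lt_of_le_of_lt ?_ hq2
    refine liminf_le_of_frequently_le' ((tendsto_add_atTop_nat 1).frequently (hfr.mono ?_))
    rintro n ⟨h1, h2, h3⟩
    rw [EReal.div_natCast_le_coe_iff (by lia)]
    have h4 := (EReal.div_natCast_le_coe_iff h3 r).1 h1.le
    rw [add_comm n 1]
    refine (hg.add_le 1 n x).trans ((add_le_add hx h4).trans ?_)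
    rw [← EReal.coe_add, EReal.coe_le_coe_iff]
    push_cast
    linarith
  obtain ⟨γ, hγ⟩ := hT.exists_ae_eq_const_of_le_comp hφm hmono
  refine ⟨γ, ?_, ?_⟩
  · obtain ⟨c, hc⟩ := exists_gt (∫ x, f x ∂ν)
    obtain ⟨x, hx1, hx2, hx3⟩ := (hγ.and ((ae_eventually_birkhoffSum_le hT hfm hf hc).and
      (ae_iterate hTm hgf))).exists
    rw [← hx1]
    refine ((liminf_le_of_frequently_le' (x := (c : EReal)) ?_).trans_lt (EReal.coe_lt_top c)).ne
    refine Eventually.frequently ?_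
    filter_upwards [hx2, eventually_ge_atTop 1] with n hn h1
    rw [EReal.div_natCast_le_coe_iff h1]
    refine (hg.le_add_birkhoffSum (f := f) (F := f) (γ := 0) (K := 0) (N := 0) (B := Set.univ)
      le_rfl hf0 (by simp) (by simp) (by simp) n x hx3).trans ?_
    rw [EReal.coe_le_coe_iff]
    simpa using hn
  · have hup : ∀ᵐ x ∂ν, ∀ q : ℚ, γ < ((q : ℝ) : EReal) →
        ∀ᶠ n : ℕ in atTop, g n x / (n : EReal) ≤ ((q : ℝ) : EReal) := by
      refine ae_all_iff.2 fun q => eventually_imp_distrib_left.2 fun hq => ?_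
      obtain ⟨r, hr1, hr2⟩ := EReal.lt_iff_exists_real_btwn.1 hq
      have hrq : r < q := by exact_mod_cast hr2
      have hslope : ∀ᵐ x ∂ν, ∃ l : ℕ, 1 ≤ l ∧ g l x ≤ ((r * l : ℝ) : EReal) := by
        filter_upwards [hγ] with x hx
        rw [← hx] at hr1
        obtain ⟨l, hl, hl1⟩ := ((frequently_lt_of_liminf_lt (by isBoundedDefault) hr1).and_eventually
          (eventually_ge_atTop 1)).exists
        exact ⟨l, hl1, (EReal.div_natCast_le_coe_iff hl1 r).1 hl.le⟩
      filter_upwards [hg.ae_eventually_forall_le hT hgm hfm hf hf0 hgf hslope (sub_pos.2 hrq)]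
        with x hx
      filter_upwards [hx, eventually_ge_atTop 1] with n hn h1
      rw [EReal.div_natCast_le_coe_iff h1]
      refine (hn 0 n (by lia)).trans ?_
      rw [EReal.coe_le_coe_iff]
      linarith
    filter_upwards [hγ, hup] with x hx1 hx2
    refine tendsto_of_le_liminf_of_limsup_le hx1.ge ?_
    refine le_of_forall_gt fun c hc => ?_
    obtain ⟨q, hq1, hq2⟩ := EReal.lt_iff_exists_rat_btwn.1 hc
    exact (limsup_le_of_le (by isBoundedDefault) (hx2 q hq1)).trans_lt hq2

end Subadditive

section Orbits

/-- The shift on two-sided sequences. -/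
def seqShift {S : Type*} (s : ℤ → S) : ℤ → S := fun n => s (n + 1)

theorem seqShift_iterate {S : Type*} (s : ℤ → S) (k : ℕ) (n : ℤ) :
    seqShift^[k] s n = s (n + k) := by
  induction k generalizing n with
  | zero => simp
  | succ k ih =>
    rw [Function.iterate_succ_apply', seqShift, ih]
    congr 1
    push_cast
    ring

/-- The restriction of a sequence of matrices to a set of indices. -/
def restrictSeq {ι : Type*} (c : Set ι) (a : ℤ → MPMatrix ι) : ℤ → MPMatrix c :=
  fun n i j => a n i j

variable {ι : Type*}

theorem restrictSeq_iterate (c : Set ι) (a : ℤ → MPMatrix ι) (k : ℕ) :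
    restrictSeq c (seqShift^[k] a) = seqShift^[k] (restrictSeq c a) := by
  funext n i j
  simp only [restrictSeq, seqShift_iterate]

theorem mpOrbit_seqShift_iterate (a : ℤ → MPMatrix ι) (k : ℕ) (l : ℤ) (n : ℕ) :
    mpOrbit (seqShift^[k] a) l n = mpOrbit a (l + k) n := by
  induction n with
  | zero => rfl
  | succ n ih =>
    simp only [mpOrbit, ih, seqShift_iterate]
    congr 2
    ring

theorem le_mpVec (M : MPMatrix ι) (v : ι → EReal) (i j : ι) : M i j + v j ≤ mpVec M v i :=
  le_iSup (fun j => M i j + v j) j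

theorem mpOrbit_add_le (a : ℤ → MPMatrix ι) (l : ℤ) (m n : ℕ) (i : ι) :
    mpOrbit a l (m + n) i ≤ (⨆ j, mpOrbit a l m j) + mpOrbit a (l + m) n i := by
  induction n generalizing i with
  | zero => simpa [mpOrbit] using le_iSup (fun j => mpOrbit a l m j) i
  | succ n ih =>
    refine iSup_le fun j => ?_
    change a (l + ((m + n : ℕ) : ℤ)) i j + mpOrbit a l (m + n) j ≤ _
    have h1 : l + ((m + n : ℕ) : ℤ) = l + m + n := by push_cast; ring
    rw [h1]
    calc a (l + m + n) i j + mpOrbit a l (m + n) j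
        ≤ a (l + m + n) i j + ((⨆ j, mpOrbit a l m j) + mpOrbit a (l + m) n j) :=
          add_le_add le_rfl (ih j)
      _ = (⨆ j, mpOrbit a l m j) + (a (l + m + n) i j + mpOrbit a (l + m) n j) :=
          add_left_comm _ _ _
      _ ≤ _ := add_le_add le_rfl (le_mpVec _ _ i j)

theorem mpOrbit_restrictSeq_le (c : Set ι) (a : ℤ → MPMatrix ι) (l : ℤ) (n : ℕ) (i : c) :
    mpOrbit (restrictSeq c a) l n i ≤ mpOrbit a l n i := by
  induction n generalizing i with
  | zero => exact le_rfl
  | succ n ih =>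
    exact iSup_le fun j => (add_le_add le_rfl (ih j)).trans (le_mpVec _ _ (i : ι) (j : ι))

/-- Decomposition of an optimal path starting in `c` according to the time at which it leaves `c`. -/
theorem mpOrbit_le_of_exit [Finite ι] (c : Set ι) (a : ℤ → MPMatrix ι) (l n : ℕ)
    (K : ℕ → EReal) (hK : ∀ k < n, ∀ i ∈ c, ∀ j ∉ c, a (l + k) i j + mpOrbit a l k j ≤ K k)
    (i : c) :
    mpOrbit a l n i ≤ mpOrbit (restrictSeq c a) l n i ∨
      ∃ k m, k + 1 + m = n ∧
        mpOrbit a l n i ≤ mpOrbit (restrictSeq c a) (l + k + 1) m i + K k := by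
  induction n generalizing i with
  | zero => exact Or.inl le_rfl
  | succ n ih =>
    have : Nonempty ι := ⟨i⟩
    obtain ⟨j, hj⟩ := exists_eq_ciSup_of_finite (f := fun j => a (l + n) i j + mpOrbit a l n j)
    have hj' : mpOrbit a l (n + 1) i = a (l + n) i j + mpOrbit a l n j := hj.symm
    by_cases hjc : j ∈ c
    · rcases ih (fun k hk => hK k (by lia)) ⟨j, hjc⟩ with h | ⟨k, m, hkm, h⟩
      · refine Or.inl ?_
        rw [hj']
        exact (add_le_add le_rfl h).trans
          (le_mpVec (restrictSeq c a (l + n)) _ i ⟨j, hjc⟩)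
      · refine Or.inr ⟨k, m + 1, by lia, ?_⟩
        rw [hj']
        refine (add_le_add le_rfl h).trans ?_
        rw [← add_assoc]
        refine add_le_add ?_ le_rfl
        have h2 : (l : ℤ) + n = l + k + 1 + m := by rw [← hkm]; push_cast; ring
        rw [h2]
        exact le_mpVec (restrictSeq c a (l + k + 1 + m)) _ i ⟨j, hjc⟩
    · refine Or.inr ⟨n, 0, rfl, ?_⟩
      rw [hj']
      simpa [mpOrbit] using hK n (by lia) i i.2 j hjc

theorem measurable_mpOrbit {X : Type*} [MeasurableSpace X] [Countable ι]
    {a : X → ℤ → MPMatrix ι} (ha : ∀ n i j, Measurable fun x => a x n i j) (l : ℤ) (n : ℕ) (i : ι) :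
    Measurable fun x => mpOrbit (a x) l n i := by
  induction n generalizing i with
  | zero => exact measurable_const
  | succ n ih => exact Measurable.iSup fun j => (ha _ i j).add (ih j)

/-- The maximal entry of the orbit of the submatrices indexed by `c`. -/
noncomputable def blockMax (c : Set ι) (n : ℕ) (a : ℤ → MPMatrix ι) : EReal :=
  ⨆ i : c, mpOrbit (restrictSeq c a) 0 n i

theorem subadditiveProcess_blockMax (c : Set ι) :
    SubadditiveProcess (seqShift (S := MPMatrix ι)) (blockMax c) where
  zero_le a := iSup_le fun i => le_rfl
  add_le m n a := by
    refine iSup_le fun i => (mpOrbit_add_le _ 0 m n i).trans (add_le_add le_rfl ?_)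
    rw [blockMax, restrictSeq_iterate]
    simp only [mpOrbit_seqShift_iterate]
    exact le_iSup (fun i : c => mpOrbit (restrictSeq c a) (0 + m) n i) i

theorem measurable_entry (n : ℤ) (i j : ι) : Measurable fun a : ℤ → MPMatrix ι => a n i j :=
  (measurable_pi_apply j).comp ((measurable_pi_apply i).comp (measurable_pi_apply n))

theorem measurable_blockMax [Countable ι] (c : Set ι) (n : ℕ) :
    Measurable (blockMax (ι := ι) c n) :=
  Measurable.iSup fun i => measurable_mpOrbit (a := restrictSeq c)
    (fun n i j => measurable_entry n (i : ι) (j : ι)) 0 n i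

theorem blockMax_iterate (c : Set ι) (n l : ℕ) (a : ℤ → MPMatrix ι) :
    blockMax c n (seqShift^[l] a) = ⨆ i : c, mpOrbit (restrictSeq c a) l n i := by
  simp only [blockMax, restrictSeq_iterate, mpOrbit_seqShift_iterate, zero_add]

/-- The positive part of the maximal entry of the matrix at time `0`. -/
noncomputable def entryBound (a : ℤ → MPMatrix ι) : ℝ := ((⨆ i, ⨆ j, a 0 i j) ⊔ 0).toReal

theorem entryBound_nonneg (a : ℤ → MPMatrix ι) : 0 ≤ entryBound a :=
  EReal.toReal_nonneg le_sup_right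

theorem measurable_entryBound [Countable ι] : Measurable (entryBound (ι := ι)) :=
  ((Measurable.iSup fun i => Measurable.iSup fun j => measurable_entry 0 i j).sup
    measurable_const).ereal_toReal

theorem le_entryBound [Finite ι] {a : ℤ → MPMatrix ι} (h : ∀ i j, a 0 i j ≠ ⊤) (i j : ι) :
    a 0 i j ≤ (entryBound a : EReal) := by
  have : Nonempty ι := ⟨i⟩
  have htop : (⨆ i, ⨆ j, a 0 i j) ⊔ 0 ≠ ⊤ := by
    obtain ⟨i', hi'⟩ := exists_eq_ciSup_of_finite (f := fun i => ⨆ j, a 0 i j)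
    obtain ⟨j', hj'⟩ := exists_eq_ciSup_of_finite (f := fun j => a 0 i' j)
    rw [← hi', ← hj']
    exact (max_lt (lt_top_iff_ne_top.2 (h i' j')) EReal.zero_lt_top).ne
  rw [entryBound, EReal.coe_toReal htop
    (ne_of_gt (lt_of_lt_of_le EReal.bot_lt_zero le_sup_right))]
  exact le_sup_of_le_left (le_iSup_of_le i (le_iSup (fun j => a 0 i j) j))

theorem blockMax_one_le [Finite ι] {a : ℤ → MPMatrix ι} (h : ∀ i j, a 0 i j ≠ ⊤) (c : Set ι) :
    blockMax c 1 a ≤ (entryBound a : EReal) :=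
  iSup_le fun i => iSup_le fun j => by
    simpa [mpOrbit, restrictSeq] using le_entryBound h (i : ι) (j : ι)

end Orbits

section Ergodic

/-- Events whose images under `T^[n]` eventually hold cannot eventually fail. -/
theorem MeasureTheory.MeasurePreserving.false_of_eventually_iterate {X : Type*} [MeasurableSpace X]
    {ν : Measure X} [IsProbabilityMeasure ν] {T : X → X} (hT : MeasurePreserving T ν ν)
    {E : ℕ → Set X} (hE : ∀ n, MeasurableSet (E n)) (h1 : ∀ᵐ x ∂ν, ∀ᶠ n in atTop, T^[n] x ∈ E n)
    (h2 : ∀ᵐ x ∂ν, ∀ᶠ n in atTop, x ∉ E n) : False := by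
  have t1 : Tendsto (fun n => ν (T^[n] ⁻¹' E n)) atTop (𝓝 (ν Set.univ)) :=
    tendsto_measure_of_ae_tendsto_indicator_of_isFiniteMeasure atTop MeasurableSet.univ
      (fun n => (hT.iterate n).measurable (hE n))
      (h1.mono fun x hx => hx.mono fun n hn => by simpa using hn)
  have t2 : Tendsto (fun n => ν (E n)) atTop (𝓝 (ν ∅)) :=
    tendsto_measure_of_ae_tendsto_indicator_of_isFiniteMeasure atTop MeasurableSet.empty hE
      (h2.mono fun x hx => hx.mono fun n hn => by simpa using hn)
  simp only [fun n => (hT.iterate n).measure_preimage (hE n).nullMeasurableSet] at t1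
  simpa using tendsto_nhds_unique t1 t2

variable {ι : Type*} {ν : Measure (ℤ → MPMatrix ι)}

/-- The almost sure limit of `y(n,0) / n` does not increase along the arcs of the graph. -/
theorem le_of_entry_ne_bot (hν : Ergodic seqShift ν) (htop : ∀ᵐ a ∂ν, ∀ i j, a 0 i j ≠ ⊤)
    {L : ι → EReal}
    (hL : ∀ᵐ a ∂ν, ∀ i, Tendsto (fun n : ℕ => yVec a n i / (n : EReal)) atTop (𝓝 (L i)))
    {i j : ι} (hij : ν {a | a 0 i j ≠ ⊥} ≠ 0) : L j ≤ L i := by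
  have hfr : ∃ᵐ a ∂ν, a 0 i j ≠ ⊥ := by
    exact frequently_ae_iff.2 hij
  obtain ⟨a, ha, htopa, hLa, hLTa⟩ := (hfr.and_eventually (htop.and (hL.and
    (hν.toMeasurePreserving.quasiMeasurePreserving.ae hL)))).exists
  by_contra! hlt
  obtain ⟨q, hq1, hq2⟩ := EReal.lt_iff_exists_real_btwn.1 hlt
  obtain ⟨p, hp1, hp2⟩ := EReal.lt_iff_exists_real_btwn.1 hq2
  have hqp : q < p := by exact_mod_cast hp1
  set e := (a 0 i j).toReal
  have he : (e : EReal) = a 0 i j := EReal.coe_toReal (htopa i j) ha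
  have hev : ∀ᶠ n : ℕ in atTop, q - e < (p - q) * n :=
    (tendsto_natCast_atTop_atTop.const_mul_atTop (sub_pos.2 hqp)).eventually_gt_atTop _
  obtain ⟨n, h1, h2, h3, h4⟩ := (((hLa j).eventually_const_lt hp2).and
    (((tendsto_add_atTop_nat 1).eventually ((hLTa i).eventually_lt_const hq1)).and
      (hev.and (eventually_ge_atTop 1)))).exists
  have h5 := (EReal.coe_le_div_natCast_iff h4 p).1 h1.le
  have h6 := (EReal.div_natCast_le_coe_iff (by lia) q).1 h2.le
  have h7 : a 0 i j + yVec a n j ≤ yVec (seqShift a) (n + 1) i := by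
    have h8 := mpOrbit_seqShift_iterate a 1 (-((n + 1 : ℕ) : ℤ)) (n + 1)
    rw [Function.iterate_one] at h8
    rw [yVec, yVec, h8]
    have h9 : -((n + 1 : ℕ) : ℤ) + (1 : ℕ) = -n := by push_cast; ring
    rw [h9]
    have h10 := le_mpVec (a (-n + n)) (mpOrbit a (-n) n) i j
    rw [neg_add_cancel] at h10
    simpa [mpOrbit] using h10
  have h8 := (add_le_add he.le h5).trans (h7.trans h6)
  rw [← EReal.coe_add, EReal.coe_le_coe_iff] at h8
  push_cast at h8
  linarith

variable [Finite ι] [IsProbabilityMeasure ν]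

/-- Every row of a product of matrices grows at most at the rate of the fastest component
reachable from it, uniformly over time intervals. -/
theorem ae_eventually_mpOrbit_le (hν : Ergodic seqShift ν)
    (htop : ∀ᵐ a ∂ν, ∀ i j, a 0 i j ≠ ⊤) (hint : Integrable entryBound ν)
    {r : ι → ι → Prop} (hr : ∀ᵐ a ∂ν, ∀ i j, ¬ r i j → a 0 i j = ⊥) {γ : Set ι → EReal}
    (hγ : ∀ c, ∀ᵐ a ∂ν, Tendsto (fun n : ℕ => blockMax c n a / (n : EReal)) atTop (𝓝 (γ c)))
    (i : ι) {q : ℝ} (hq : ∀ c, IsSCC r c → Reaches r i c → γ c < q) {ε : ℝ} (hε : 0 < ε) :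
    ∀ᵐ a ∂ν, ∀ᶠ n : ℕ in atTop, ∀ l m : ℕ, l + m ≤ n →
      mpOrbit a l m i ≤ ((q * m + ε * n : ℝ) : EReal) := by
  induction hN : {j | Relation.ReflTransGen r i j}.ncard using Nat.strong_induction_on
    generalizing i ε with
  | _ N ih =>
  set c : Set ι := {j | Relation.ReflTransGen r i j ∧ Relation.ReflTransGen r j i} with hc
  have hic : i ∈ c := ⟨.refl, .refl⟩
  have hε4 : 0 < ε / 4 := by positivity
  have hE : ∀ᵐ a ∂ν, ∀ j, Relation.ReflTransGen r i j ∧ j ∉ c → ∀ᶠ n : ℕ in atTop,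
      ∀ l m : ℕ, l + m ≤ n → mpOrbit a l m j ≤ ((q * m + ε / 4 * n : ℝ) : EReal) := by
    refine ae_all_iff.2 fun j => eventually_imp_distrib_left.2 fun ⟨hij, hj⟩ => ?_
    refine ih _ ?_ j (fun c' h1 ⟨k, hk, hjk⟩ => hq c' h1 ⟨k, hk, hij.trans hjk⟩) hε4 rfl
    rw [← hN]
    refine Set.ncard_lt_ncard ⟨fun k hk => hij.trans hk, fun hsub => hj ⟨hij, ?_⟩⟩
    exact hsub (Relation.ReflTransGen.refl : Relation.ReflTransGen r i i)
  have hslope : ∀ᵐ a ∂ν, ∃ l : ℕ, 1 ≤ l ∧ blockMax c l a ≤ ((q * l : ℝ) : EReal) := by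
    filter_upwards [hγ c] with a ha
    obtain ⟨l, hl, hl1⟩ := ((ha.eventually_lt_const (hq c ⟨i, hc⟩ ⟨i, hic, .refl⟩)).and
      (eventually_ge_atTop 1)).exists
    exact ⟨l, hl1, (EReal.div_natCast_le_coe_iff hl1 q).1 hl.le⟩
  have hmp := hν.toMeasurePreserving
  filter_upwards [hE, (subadditiveProcess_blockMax c).ae_eventually_forall_le hν
      (measurable_blockMax c) measurable_entryBound hint entryBound_nonneg
      (htop.mono fun a ha => blockMax_one_le ha c) hslope hε4,
    ae_eventually_iterate_le hν measurable_entryBound hint hε4,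
    ae_iterate hmp htop, ae_iterate hmp hr] with a h1 h2 h3 htopa hra
  have h1' : ∀ᶠ n : ℕ in atTop, ∀ j, Relation.ReflTransGen r i j ∧ j ∉ c →
      ∀ l m : ℕ, l + m ≤ n → mpOrbit a l m j ≤ ((q * m + ε / 4 * n : ℝ) : EReal) :=
    eventually_all.2 fun j => eventually_imp_distrib_left.2 (h1 j)
  have hev : ∀ᶠ n : ℕ in atTop, -q ≤ ε / 4 * n :=
    (tendsto_natCast_atTop_atTop.const_mul_atTop hε4).eventually_ge_atTop _
  filter_upwards [h1', h2, h3, hev] with n h1n h2n h3n hn l m hlm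
  have hblock : ∀ l m : ℕ, l + m ≤ n →
      mpOrbit (restrictSeq c a) l m ⟨i, hic⟩ ≤ ((q * m + ε / 4 * n : ℝ) : EReal) := fun l m h => by
    refine le_trans ?_ (h2n l m h)
    rw [blockMax_iterate]
    exact le_iSup (fun i : c => mpOrbit (restrictSeq c a) l m i) _
  have hn0 : 0 ≤ ε / 4 * n := by positivity
  have hexit : ∀ k < m, ∀ i' ∈ c, ∀ j ∉ c,
      a (l + k) i' j + mpOrbit a l k j ≤ ((q * k + ε / 2 * n : ℝ) : EReal) := by
    intro k hk i' hi' j hj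
    have hentry : ∀ i j, seqShift^[l + k] a 0 i j = a (l + k) i j := fun i j => by
      rw [seqShift_iterate]; push_cast; rw [zero_add]
    by_cases hij : r i' j
    · have h4 := h1n j ⟨hi'.1.tail hij, hj⟩ l k (by lia)
      have h5 := le_entryBound (htopa (l + k)) i' j
      rw [hentry] at h5
      have h6 := h5.trans (EReal.coe_le_coe_iff.2 (h3n (l + k) (by lia)))
      refine (add_le_add h6 h4).trans ?_
      rw [← EReal.coe_add, EReal.coe_le_coe_iff]
      linarith
    · have h4 := hra (l + k) i' j hij
      rw [hentry] at h4
      rw [h4, EReal.bot_add]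
      exact bot_le
  rcases mpOrbit_le_of_exit c a l m (fun k => ((q * k + ε / 2 * n : ℝ) : EReal)) hexit ⟨i, hic⟩ with h | ⟨k, m', hkm, h⟩
  · refine h.trans ((hblock l m hlm).trans ?_)
    rw [EReal.coe_le_coe_iff]
    linarith
  · refine h.trans ?_
    have h4 := hblock (l + k + 1) m' (by lia)
    rw [show ((l + k + 1 : ℕ) : ℤ) = l + k + 1 by push_cast; ring] at h4
    refine (add_le_add h4 le_rfl).trans ?_
    rw [← EReal.coe_add, EReal.coe_le_coe_iff, ← hkm]
    push_cast
    linarith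

/-- The formula for the deterministic limit of `y(n,0) / n`, on the space of sequences. -/
theorem isGreatest_of_tendsto_yVec (hν : Ergodic seqShift ν)
    (htop : ∀ᵐ a ∂ν, ∀ i j, a 0 i j ≠ ⊤) (hint : Integrable entryBound ν)
    {r : ι → ι → Prop} (hr : ∀ i j, r i j ↔ ν {a | a 0 i j ≠ ⊥} ≠ 0) {γ : Set ι → EReal}
    (hγ : ∀ c, ∀ᵐ a ∂ν, Tendsto (fun n : ℕ => blockMax c n a / (n : EReal)) atTop (𝓝 (γ c)))
    {L : ι → EReal}
    (hL : ∀ᵐ a ∂ν, ∀ i, Tendsto (fun n : ℕ => yVec a n i / (n : EReal)) atTop (𝓝 (L i)))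
    (i : ι) :
    IsGreatest {g : EReal | ∃ c : Set ι, IsSCC r c ∧ Reaches r i c ∧ g = γ c} (L i) := by
  have hmp := hν.toMeasurePreserving
  have hmono : ∀ j, Relation.ReflTransGen r i j → L j ≤ L i := fun j hj => by
    induction hj with
    | refl => exact le_rfl
    | tail _ h ih => exact (le_of_entry_ne_bot hν htop hL ((hr _ _).1 h)).trans ih
  have hupper : ∀ c, IsSCC r c → Reaches r i c → γ c ≤ L i := by
    rintro c ⟨k, rfl⟩ ⟨k', hk', hik'⟩
    set c : Set ι := {j | Relation.ReflTransGen r k j ∧ Relation.ReflTransGen r j k}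
    by_contra! hlt
    obtain ⟨q, hq1, hq2⟩ := EReal.lt_iff_exists_real_btwn.1 hlt
    refine hmp.false_of_eventually_iterate
      (E := fun n => {a | ((q * n : ℝ) : EReal) < ⨆ j : c, mpOrbit (restrictSeq c a) (-n) n j})
      (fun n => measurableSet_lt measurable_const (Measurable.iSup fun j =>
        measurable_mpOrbit (a := restrictSeq c)
          (fun n i j => measurable_entry n (i : ι) (j : ι)) _ n j)) ?_ ?_
    · filter_upwards [hγ c] with a ha
      filter_upwards [ha.eventually_const_lt hq2, eventually_ge_atTop 1] with n hn h1
      simp only [restrictSeq_iterate, mpOrbit_seqShift_iterate, neg_add_cancel]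
      exact lt_of_not_ge fun h => hn.not_ge ((EReal.div_natCast_le_coe_iff h1 q).2 h)
    · filter_upwards [hL] with a ha
      have hall : ∀ᶠ n : ℕ in atTop, ∀ j : c, yVec a n j / (n : EReal) < q :=
        eventually_all.2 fun j => (ha j).eventually_lt_const
          ((hmono j (hik'.trans (hk'.2.trans j.2.1))).trans_lt hq1)
      filter_upwards [hall, eventually_ge_atTop 1] with n hn h1
      simp only [not_lt]
      exact iSup_le fun j => (mpOrbit_restrictSeq_le c a _ n j).trans
        ((EReal.div_natCast_le_coe_iff h1 q).1 (hn j).le)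
  refine ⟨?_, fun g ⟨c, h1, h2, h3⟩ => h3.le.trans (hupper c h1 h2)⟩
  obtain ⟨c, ⟨hc1, hc2⟩, hmax⟩ := Set.exists_max_image {c : Set ι | IsSCC r c ∧ Reaches r i c} γ
    (Set.toFinite _) ⟨_, ⟨i, rfl⟩, i, ⟨.refl, .refl⟩, .refl⟩
  refine ⟨c, hc1, hc2, le_antisymm ?_ (hupper c hc1 hc2)⟩
  by_contra! hlt
  obtain ⟨p, hp1, hp2⟩ := EReal.lt_iff_exists_real_btwn.1 hlt
  obtain ⟨q, hq1, hq2⟩ := EReal.lt_iff_exists_real_btwn.1 hp1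
  have hqp : q < p := by exact_mod_cast hq2
  have hr' : ∀ᵐ a ∂ν, ∀ i j, ¬ r i j → a 0 i j = ⊥ := by
    refine ae_all_iff.2 fun i => ae_all_iff.2 fun j => eventually_imp_distrib_left.2 fun hij => ?_
    rw [hr, not_not] at hij
    exact ae_iff.2 hij
  refine hmp.false_of_eventually_iterate
    (E := fun n => {a | mpOrbit a (-n) n i ≤ ((p * n : ℝ) : EReal)})
    (fun n => measurableSet_le (measurable_mpOrbit (a := id) measurable_entry _ n i)
      measurable_const) ?_ ?_
  · filter_upwards [ae_eventually_mpOrbit_le hν htop hint hr' hγ i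
      (fun c' h1 h2 => (hmax c' ⟨h1, h2⟩).trans_lt hq1) (sub_pos.2 hqp)] with a ha
    filter_upwards [ha] with n hn
    have := hn 0 n (by lia)
    simp only [mpOrbit_seqShift_iterate, neg_add_cancel]
    refine this.trans (EReal.coe_le_coe_iff.2 ?_)
    linarith
  · filter_upwards [hL] with a ha
    filter_upwards [(ha i).eventually_const_lt hp2, eventually_ge_atTop 1] with n hn h1
    exact fun h => hn.not_ge ((EReal.div_natCast_le_coe_iff h1 p).2 h)

end Ergodic

theorem limit_formula_of_deterministic_y_limit
    {d : ℕ} {Ω : Type*} [MeasurableSpace Ω] (μ : Measure Ω) [IsProbabilityMeasure μ]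
    (A : ℤ → Ω → MPMatrix (Fin d)) (hmeas : ∀ n, Measurable (A n))
    (hnotop : ∀ n ω i j, A n ω i j ≠ ⊤)
    (herg : StationaryErgodic μ A)
    (hrow : ∀ᵐ ω ∂μ, ∀ i, ∃ j, A 0 ω i j ≠ ⊥)
    (hint : Integrable (fun ω => ((⨆ i, ⨆ j, A 0 ω i j) ⊔ 0).toReal) μ)
    (L : Fin d → EReal)
    (hL : ∀ᵐ ω ∂μ, ∀ i,
      Tendsto (fun n : ℕ => yVec (fun k => A k ω) n i / (n : EReal)) atTop (𝓝 (L i))) :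
    (∀ c : Set (Fin d), IsSCC (arcRel μ A) c →
      IsMaxLyapunov μ (subMatrix A c) (maxLyapunov μ (subMatrix A c)) ∧
        maxLyapunov μ (subMatrix A c) ≠ ⊤) ∧
    ∀ i, IsGreatest {g : EReal | ∃ c : Set (Fin d), IsSCC (arcRel μ A) c ∧
        Reaches (arcRel μ A) i c ∧ g = maxLyapunov μ (subMatrix A c)} (L i) := by
  set Φ : Ω → ℤ → MPMatrix (Fin d) := fun ω n => A n ω
  have hΦ : Measurable Φ := measurable_pi_lambda _ hmeas
  have : IsProbabilityMeasure (μ.map Φ) := Measure.isProbabilityMeasure_map hΦ.aemeasurable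
  have hν : Ergodic seqShift (μ.map Φ) := herg
  have hbot : ∀ i j, MeasurableSet {a : ℤ → MPMatrix (Fin d) | a 0 i j ≠ ⊥} := fun i j =>
    measurable_entry 0 i j (measurableSet_singleton ⊥).compl
  have htop : ∀ᵐ a ∂μ.map Φ, ∀ i j, a 0 i j ≠ ⊤ :=
    ae_all_iff.2 fun i => ae_all_iff.2 fun j => (ae_map_iff hΦ.aemeasurable
      (measurable_entry 0 i j (measurableSet_singleton ⊤).compl)).2
      (ae_of_all _ fun ω => hnotop 0 ω i j)
  have hint' : Integrable entryBound (μ.map Φ) :=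
    (integrable_map_measure measurable_entryBound.aestronglyMeasurable hΦ.aemeasurable).2 hint
  have hL' : ∀ᵐ a ∂μ.map Φ, ∀ i,
      Tendsto (fun n : ℕ => yVec a n i / (n : EReal)) atTop (𝓝 (L i)) :=
    ae_all_iff.2 fun i => (ae_map_iff hΦ.aemeasurable (measurableSet_tendsto _ fun n =>
      (measurable_mpOrbit (a := id) measurable_entry _ n i).mul measurable_const)).2
      (hL.mono fun ω hω => hω i)
  have hr : ∀ i j, arcRel μ A i j ↔ μ.map Φ {a | a 0 i j ≠ ⊥} ≠ 0 := fun i j => by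
    rw [Measure.map_apply hΦ (hbot i j), arcRel, pos_iff_ne_zero]
    rfl
  choose γ hγtop hγ using fun c : Set (Fin d) =>
    (subadditiveProcess_blockMax c).exists_ae_tendsto hν (measurable_blockMax c)
      measurable_entryBound hint' entryBound_nonneg (htop.mono fun a ha => blockMax_one_le ha c)
  have hLyap : ∀ c, IsMaxLyapunov μ (subMatrix A c) (γ c) := fun c =>
    ae_of_ae_map hΦ.aemeasurable (hγ c)
  have heq : ∀ c, maxLyapunov μ (subMatrix A c) = γ c := fun c => by
    have hex : ∃ g, IsMaxLyapunov μ (subMatrix A c) g := ⟨γ c, hLyap c⟩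
    rw [maxLyapunov, dif_pos hex]
    obtain ⟨ω, h1, h2⟩ := (hex.choose_spec.and (hLyap c)).exists
    exact tendsto_nhds_unique h1 h2
  simp only [heq]
  exact ⟨fun c _ => ⟨hLyap c, hγtop c⟩,
    fun i => isGreatest_of_tendsto_yVec hν htop hint' hr hγ hL' i⟩
end

section
/- Let $d\ge 1$ and let $\mathbb{R}_{\max}=\mathbb{R}\cup\{-\infty\}$. For $A\in\mathbb{R}_{\max}^{d\times d}$ and $v\in\mathbb{R}_{\max}^{d}$ let $A\otimes v\in\mathbb{R}_{\max}^d$ be the max-plus product, $(A\otimes v)_i=\max_j(A_{ij}+v_j)$, and let $0$ also denote the zero vector. Let $(A(n))_{n\in\mathbb{Z}}$ be a stationary and ergodic sequence of random $d\times d$ matrices with entries in $\mathbb{R}_{\max}$, almost surely having at least one finite entry on each row, such that $A(0)\otimes 0$ is integrable, that is, each coordinate $\max_j A_{ij}(0)$ is integrable. For $n\ge 1$ set $$x(n,0):=A(n-1)\otimes\cdots\otimes A(0)\otimes 0,\qquad y(n,0):=A(-1)\otimes\cdots\otimes A(-n)\otimes 0.$$ Then there exist two real numbers $\gamma(A)$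 and $\gamma_b(A)$ such that almost surely $$\lim_n \frac1n\max_i x_i(n,0)=\lim_n\frac1n\max_i y_i(n,0)=\gamma(A)$$ and $$\lim_n \frac1n\min_i x_i(n,0)=\lim_n\frac1n\min_i y_i(n,0)=\gamma_b(A).$$ -/
open Filter MeasureTheory Topology

noncomputable section

namespace MaxPlus

/-- `ℝ_max = ℝ ∪ {-∞}`: here `⊔` is the max-plus addition and `+` the max-plus
multiplication (with `⊥ = -∞` absorbing for `+`). -/
abbrev RMax : Type := WithBot ℝ

/-- The inclusion of `ℝ ∪ {-∞}` in the extended reals `ℝ ∪ {-∞, +∞}`. -/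
def RMax.toEReal : RMax → EReal
  | ⊥ => ⊥
  | (r : ℝ) => (r : EReal)

/-- The Borel σ-algebra of `ℝ ∪ {-∞}`, as a subset of the extended reals. -/
instance RMax.instMeasurableSpace : MeasurableSpace RMax :=
  MeasurableSpace.comap RMax.toEReal inferInstance

/-- `d × d` matrices over `ℝ_max`, with the product σ-algebra. -/
abbrev Mat (d : ℕ) : Type := Fin d → Fin d → RMax

/-- `(A ⊗ v)_i = max_j (A_{ij} + v_j)`. -/
def mulVec {d : ℕ} (A : Mat d) (v : Fin d → RMax) : Fin d → RMax :=
  fun i => Finset.univ.sup fun j => A i j + v j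

/-- `prodZero A m n = A(m+n-1) ⊗ ⋯ ⊗ A(m+1) ⊗ A(m) ⊗ 0`, a product of `n` matrices applied to
the zero vector. -/
def prodZero {d : ℕ} (A : ℤ → Mat d) (m : ℤ) : ℕ → Fin d → RMax
  | 0 => fun _ => 0
  | n + 1 => mulVec (A (m + n)) (prodZero A m n)

/-- `x(n,0) = A(n-1) ⊗ ⋯ ⊗ A(0) ⊗ 0`. -/
def x {d : ℕ} (A : ℤ → Mat d) (n : ℕ) : Fin d → RMax := prodZero A 0 n

/-- `y(n,0) = A(-1) ⊗ ⋯ ⊗ A(-n) ⊗ 0`. -/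
def y {d : ℕ} (A : ℤ → Mat d) (n : ℕ) : Fin d → RMax := prodZero A (-n) n

/-- `max_i v_i`. -/
def maxCoord {d : ℕ} [NeZero d] (v : Fin d → RMax) : RMax :=
  Finset.univ.sup' Finset.univ_nonempty v

/-- `min_i v_i`. -/
def minCoord {d : ℕ} [NeZero d] (v : Fin d → RMax) : RMax :=
  Finset.univ.inf' Finset.univ_nonempty v

/-- `a / n`, as an extended real. -/
def avg (n : ℕ) (a : RMax) : EReal := ((1 / (n : ℝ) : ℝ) : EReal) * a.toEReal

/-- An `ℝ_max`-valued random variable is integrable if it is almost surely equal to an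
integrable real random variable (in particular it is almost surely finite). -/
def IntegrableRMax {Ω : Type*} [MeasurableSpace Ω] (X : Ω → RMax) (μ : Measure Ω) : Prop :=
  ∃ f : Ω → ℝ, Integrable f μ ∧ ∀ᵐ ω ∂μ, X ω = (f ω : RMax)

/-- The shift on two-sided sequences. -/
def shift {S : Type*} (s : ℤ → S) : ℤ → S := fun n => s (n + 1)

/-- The two-sided sequence `(X(n))_{n ∈ ℤ}` is stationary and ergodic: the shift preserves its
law on the path space `S^ℤ`, and shift-invariant measurable sets of paths have probability
`0` or `1` (`Ergodic` contains both properties). -/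
def StationaryErgodic {Ω S : Type*} [MeasurableSpace Ω] [MeasurableSpace S]
    (X : ℤ → Ω → S) (μ : Measure Ω) : Prop :=
  Ergodic (shift : (ℤ → S) → ℤ → S) (μ.map fun ω n => X n ω)

end MaxPlus

end

namespace MaxPlus

/-- A measurable subadditive cocycle over `T` whose absolute value is bounded by the Birkhoff
sums of the nonnegative function `h`. -/
structure DominatedCocycle {α : Type*} [MeasurableSpace α] (T : α → α) (g : ℕ → α → ℝ)
    (h : α → ℝ) : Prop where
  measurable : ∀ n, Measurable (g n)
  subadd : ∀ m n x, g (m + n) x ≤ g m x + g n (T^[m] x)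
  nonneg : ∀ x, 0 ≤ h x
  dominated : ∀ n x, |g n x| ≤ birkhoffSum T h n x

section Kingman

variable {α : Type*} [MeasurableSpace α] {T : α → α} {μ : Measure α} {g : ℕ → α → ℝ}
  {h : α → ℝ}

/-- The points at which no `g n` with `1 ≤ n ≤ K` lies below `n * c`. -/
def slowSet (g : ℕ → α → ℝ) (c : ℝ) (K : ℕ) : Set α :=
  {x | ∀ n, 1 ≤ n → n ≤ K → n * c < g n x}

theorem measurableSet_slowSet (hg : ∀ n, Measurable (g n)) (c : ℝ) (K : ℕ) :
    MeasurableSet (slowSet g c K) := by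
  have : slowSet g c K = ⋂ n, ⋂ (_ : 1 ≤ n), ⋂ (_ : n ≤ K), {x | n * c < g n x} := by
    ext x; simp [slowSet]
  rw [this]
  exact .iInter fun n => .iInter fun _ => .iInter fun _ =>
    measurableSet_lt measurable_const (hg n)

theorem antitone_slowSet {α : Type*} {g : ℕ → α → ℝ} (c : ℝ) : Antitone (slowSet g c) :=
  fun _ _ hK _ hx n h1 hn => hx n h1 (hn.trans hK)

/-- Covering an orbit segment by blocks on which the cocycle is small, single steps in the slow
set, and an incomplete last block. -/
theorem DominatedCocycle.le_sum_covering (hg : DominatedCocycle T g h) (c : ℝ) (K n : ℕ) (x : α) :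
    g n x ≤ ∑ j ∈ Finset.range n,
      (c + (slowSet g c K).indicator (fun z => h z + |c|) (T^[j] x)
        + if n ≤ j + K then h (T^[j] x) + |c| else 0) := by
  have hφ : ∀ z, 0 ≤ h z + |c| := fun z => add_nonneg (hg.nonneg z) (abs_nonneg c)
  have hind : ∀ z, 0 ≤ (slowSet g c K).indicator (fun z => h z + |c|) z :=
    fun z => Set.indicator_nonneg (fun z _ => hφ z) z
  have hite : ∀ (p : Prop) [Decidable p] z, 0 ≤ if p then h z + |c| else 0 := by
    intro p _ z
    split_ifs
    exacts [hφ z, le_rfl]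
  induction n using Nat.strong_induction_on generalizing x with
  | _ n ih =>
  rcases Nat.eq_zero_or_pos n with rfl | hn
  · have := (abs_le.1 (hg.dominated 0 x)).2
    simpa [birkhoffSum] using this
  by_cases hx : x ∈ slowSet g c K
  · obtain ⟨m, rfl⟩ : ∃ m, n = m + 1 := ⟨n - 1, by omega⟩
    have h1 := hg.subadd 1 m x
    have h2 := (abs_le.1 (hg.dominated 1 x)).2
    have h3 := ih m (by omega) (T x)
    rw [Finset.sum_range_succ']
    simp only [Function.iterate_succ, Function.comp_apply, Function.iterate_zero, id_eq,
      birkhoffSum_one, Set.indicator_of_mem hx] at *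
    have h4 := hite (m + 1 ≤ 0 + K) x
    have h5 := neg_abs_le c
    have h6 : ∀ j, (m + 1 ≤ j + 1 + K) = (m ≤ j + K) := fun j => by
      simp only [eq_iff_iff]; omega
    simp only [h6]
    rw [add_comm 1 m] at h1
    linarith
  · obtain ⟨k, hk1, hkK, hk⟩ : ∃ k, 1 ≤ k ∧ k ≤ K ∧ g k x ≤ k * c := by
      simpa [slowSet] using hx
    rcases le_or_gt k n with hkn | hkn
    · obtain ⟨m, rfl⟩ := Nat.exists_eq_add_of_le hkn
      have h1 := hg.subadd k m x
      have h3 := ih m (by omega) (T^[k] x)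
      rw [Finset.sum_range_add]
      have h4 : (k : ℝ) * c ≤ ∑ j ∈ Finset.range k,
          (c + (slowSet g c K).indicator (fun z => h z + |c|) (T^[j] x)
            + if k + m ≤ j + K then h (T^[j] x) + |c| else 0) := by
        calc (k : ℝ) * c = ∑ j ∈ Finset.range k, c := by simp
          _ ≤ _ := Finset.sum_le_sum fun j _ => by
            linarith [hind (T^[j] x), hite (k + m ≤ j + K) (T^[j] x)]
      have h6 : ∀ j, (k + m ≤ k + j + K) = (m ≤ j + K) := fun j => by
        simp only [eq_iff_iff]; omega
      have h7 : ∀ j, T^[k + j] x = T^[j] (T^[k] x) := fun j => by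
        rw [add_comm, Function.iterate_add_apply]
      simp only [h6, h7]
      linarith
    · refine (abs_le.1 (hg.dominated n x)).2.trans ?_
      refine Finset.sum_le_sum fun j _ => ?_
      rw [if_pos (by omega)]
      linarith [hind (T^[j] x), neg_abs_le c]

theorem DominatedCocycle.integrable (hg : DominatedCocycle T g h)
    (hT : MeasurePreserving T μ μ) (hh : Integrable h μ) (n : ℕ) : Integrable (g n) μ := by
  have : Integrable (birkhoffSum T h n) μ :=
    integrable_finsetSum _ fun k _ => (hT.iterate k).integrable_comp_of_integrable hh
  exact this.mono' (hg.measurable n).aestronglyMeasurable (ae_of_all _ fun x => hg.dominated n x)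

theorem integrable_comp_iterate (hT : MeasurePreserving T μ μ) {f : α → ℝ} (hf : Integrable f μ)
    (n : ℕ) : Integrable (fun x => f (T^[n] x)) μ :=
  (hT.iterate n).integrable_comp_of_integrable hf

theorem integral_comp_iterate (hT : MeasurePreserving T μ μ) {f : α → ℝ} (hf : Integrable f μ)
    (n : ℕ) : ∫ x, f (T^[n] x) ∂μ = ∫ x, f x ∂μ := by
  have hm := hT.iterate n
  have := integral_map (μ := μ) hm.measurable.aemeasurable (f := f)
    (by rw [hm.map_eq]; exact hf.aestronglyMeasurable)
  rw [← this, hm.map_eq]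

theorem integral_birkhoffSum (hT : MeasurePreserving T μ μ) {f : α → ℝ} (hf : Integrable f μ)
    (n : ℕ) : ∫ x, birkhoffSum T f n x ∂μ = n * ∫ x, f x ∂μ := by
  simp only [birkhoffSum]
  rw [integral_finsetSum _ fun k _ => integrable_comp_iterate hT hf k]
  simp [integral_comp_iterate hT hf]

theorem DominatedCocycle.integral_le [IsProbabilityMeasure μ] (hg : DominatedCocycle T g h)
    (hT : MeasurePreserving T μ μ) (hh : Integrable h μ) (c : ℝ) (K n : ℕ) :
    ∫ x, g n x ∂μ ≤ n * (c + ∫ x in slowSet g c K, (h x + |c|) ∂μ)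
      + K * ∫ x, (h x + |c|) ∂μ := by
  have hφ : Integrable (fun z => h z + |c|) μ := hh.add (integrable_const _)
  have hφ0 : 0 ≤ ∫ x, (h x + |c|) ∂μ :=
    integral_nonneg fun z => add_nonneg (hg.nonneg z) (abs_nonneg c)
  have hE := measurableSet_slowSet hg.measurable c K
  have hind : Integrable ((slowSet g c K).indicator fun z => h z + |c|) μ := hφ.indicator hE
  have i1 : ∀ j, Integrable
      (fun x => c + (slowSet g c K).indicator (fun z => h z + |c|) (T^[j] x)) μ := fun j =>
    (integrable_const c).add (integrable_comp_iterate hT hind j)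
  have i2 : ∀ j, Integrable (fun x => if n ≤ j + K then h (T^[j] x) + |c| else 0) μ := by
    intro j
    split_ifs
    · exact integrable_comp_iterate hT hφ j
    · exact integrable_zero _ _ _
  have e : ∀ j, ∫ x, (c + (slowSet g c K).indicator (fun z => h z + |c|) (T^[j] x)
        + if n ≤ j + K then h (T^[j] x) + |c| else 0) ∂μ
      = (c + ∫ x in slowSet g c K, (h x + |c|) ∂μ)
        + if n ≤ j + K then ∫ x, (h x + |c|) ∂μ else 0 := by
    intro j
    rw [integral_add (i1 j) (i2 j), integral_add (integrable_const c)
      (integrable_comp_iterate hT hind j), integral_comp_iterate hT hind,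
      integral_indicator hE]
    congr 1
    · simp
    · split_ifs
      · exact integral_comp_iterate hT hφ j
      · simp
  calc ∫ x, g n x ∂μ ≤ ∫ x, ∑ j ∈ Finset.range n,
      (c + (slowSet g c K).indicator (fun z => h z + |c|) (T^[j] x)
        + if n ≤ j + K then h (T^[j] x) + |c| else 0) ∂μ :=
        integral_mono (hg.integrable hT hh n)
          (integrable_finsetSum _ fun j _ => (i1 j).add (i2 j)) (hg.le_sum_covering c K n)
    _ = n * (c + ∫ x in slowSet g c K, (h x + |c|) ∂μ)
        + ((Finset.range n).filter fun j => n ≤ j + K).card * ∫ x, (h x + |c|) ∂μ := by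
      rw [integral_finsetSum]
      swap
      · exact fun j _ => (i1 j).add (i2 j)
      simp only [e, Finset.sum_add_distrib]
      rw [← Finset.sum_filter]
      simp; ring
    _ ≤ _ := by
      gcongr
      calc _ ≤ (Finset.Ico (n - K) n).card := Finset.card_le_card fun j => by
            simp only [Finset.mem_filter, Finset.mem_range, Finset.mem_Ico]; omega
        _ ≤ K := by rw [Nat.card_Ico]; omega

/-- If almost every orbit has a block with average at most `c`, the limit of the mean averages
is at most `c`. -/
theorem DominatedCocycle.lim_integral_le [IsProbabilityMeasure μ] (hg : DominatedCocycle T g h)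
    (hT : MeasurePreserving T μ μ) (hh : Integrable h μ) {γ c : ℝ}
    (hγ : Tendsto (fun n : ℕ => (∫ x, g n x ∂μ) / n) atTop (𝓝 γ))
    (hc : ∀ᵐ x ∂μ, ∃ n, 1 ≤ n ∧ g n x ≤ n * c) : γ ≤ c := by
  have hφ : Integrable (fun z => h z + |c|) μ := hh.add (integrable_const _)
  have step : ∀ K, γ ≤ c + ∫ x in slowSet g c K, (h x + |c|) ∂μ := by
    intro K
    have h1 : Tendsto (fun n : ℕ => (c + ∫ x in slowSet g c K, (h x + |c|) ∂μ)
        + (K * ∫ x, (h x + |c|) ∂μ) / n) atTop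
        (𝓝 ((c + ∫ x in slowSet g c K, (h x + |c|) ∂μ) + 0)) :=
      tendsto_const_nhds.add (tendsto_const_div_atTop_nhds_zero_nat _)
    rw [add_zero] at h1
    refine le_of_tendsto_of_tendsto hγ h1 ?_
    filter_upwards [eventually_gt_atTop 0] with n hn
    have hn' : (0 : ℝ) < n := by exact_mod_cast hn
    rw [div_le_iff₀ hn', add_mul, div_mul_cancel₀ _ hn'.ne', mul_comm _ (n : ℝ)]
    exact hg.integral_le hT hh c K n
  have hlim := tendsto_setIntegral_of_antitone (μ := μ) (f := fun z => h z + |c|)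
    (fun K => measurableSet_slowSet hg.measurable c K) (antitone_slowSet c)
    ⟨0, hφ.integrableOn⟩
  have hnull : μ (⋂ K, slowSet g c K) = 0 := by
    refine measure_mono_null (t := {x | ¬ ∃ n, 1 ≤ n ∧ g n x ≤ n * c}) ?_ hc
    rintro x hx ⟨n, hn, hle⟩
    exact absurd ((Set.mem_iInter.1 hx n) n hn le_rfl) (not_lt.2 hle)
  rw [Measure.restrict_eq_zero.2 hnull, integral_zero_measure] at hlim
  have := ge_of_tendsto' (hlim.const_add c) step
  simpa using this

/-- The lower half of Kingman's theorem. -/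
theorem DominatedCocycle.ae_eventually_lt [IsProbabilityMeasure μ] (hg : DominatedCocycle T g h)
    (hT : Ergodic T μ) (hh : Integrable h μ) {γ : ℝ}
    (hγ : Tendsto (fun n : ℕ => (∫ x, g n x ∂μ) / n) atTop (𝓝 γ)) {b : ℝ} (hb : b < γ) :
    ∀ᵐ x ∂μ, ∀ᶠ n : ℕ in atTop, n * b < g n x := by
  obtain ⟨c, hbc, hcγ⟩ := exists_between hb
  let B : Set α := {x | ∃ k : ℕ, ∀ N : ℕ, ∃ n ≥ N, g n x ≤ n * (c - 1 / (k + 1))}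
  have hB : MeasurableSet B := by
    have : B = ⋃ k : ℕ, ⋂ N : ℕ, ⋃ n : ℕ, ⋃ (_ : n ≥ N), {x | g n x ≤ n * (c - 1 / (k + 1))} := by
      ext x; simp [B]
    rw [this]
    exact .iUnion fun k => .iInter fun N => .iUnion fun n => .iUnion fun _ =>
      measurableSet_le (hg.measurable n) measurable_const
  have hinv : T ⁻¹' B ⊆ B := by
    rintro x ⟨k, hk⟩
    refine ⟨k + 1, fun N => ?_⟩
    let δ : ℝ := 1 / (k + 1) - 1 / ((k + 1 : ℕ) + 1)
    have hδ : 0 < δ := by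
      simp only [δ, sub_pos]
      apply one_div_lt_one_div_of_lt <;> push_cast <;> linarith [(k.cast_nonneg : (0 : ℝ) ≤ k)]
    obtain ⟨M, hM⟩ := exists_nat_ge ((h x - (c - 1 / ((k + 1 : ℕ) + 1))) / δ)
    obtain ⟨n, hn, hle⟩ := hk (max N M)
    refine ⟨1 + n, by have := le_max_left N M; omega, ?_⟩
    have h1 := hg.subadd 1 n x
    have h2 := (abs_le.1 (hg.dominated 1 x)).2
    rw [birkhoffSum_one] at h2
    have hMn : (M : ℝ) ≤ n := by exact_mod_cast (le_max_right N M).trans hn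
    rw [div_le_iff₀ hδ] at hM
    have h3 : (M : ℝ) * δ ≤ n * δ := by gcongr
    have h4 : (n : ℝ) * δ = n * (c - 1 / ((k + 1 : ℕ) + 1)) - n * (c - 1 / (k + 1)) := by
      simp only [δ]; ring
    have h5 : g n (T^[1] x) = g n (T x) := rfl
    rw [Nat.cast_add 1 n, Nat.cast_one, add_mul, one_mul]
    linarith
  rcases hT.ae_empty_or_univ_of_preimage_ae_le hB.nullMeasurableSet hinv.eventuallyLE with h0 | h1
  · have hnot : ∀ᵐ x ∂μ, x ∉ B := by
      filter_upwards [h0] with x hx hxB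
      exact (hx.mp hxB : x ∈ (∅ : Set α))
    filter_upwards [hnot] with x hx
    obtain ⟨k, hk⟩ := exists_nat_one_div_lt (sub_pos.2 hbc)
    have : ∃ N : ℕ, ∀ n ≥ N, n * (c - 1 / (k + 1)) < g n x := by
      by_contra! hcon
      exact hx ⟨k, hcon⟩
    obtain ⟨N, hN⟩ := this
    filter_upwards [eventually_ge_atTop N] with n hn
    refine lt_of_le_of_lt ?_ (hN n hn)
    gcongr
    linarith
  · refine absurd (hg.lim_integral_le hT.toMeasurePreserving hh hγ (c := c) ?_) (not_le.2 hcγ)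
    filter_upwards [h1] with x hx
    obtain ⟨k, hk⟩ : x ∈ B := hx.mpr trivial
    obtain ⟨n, hn, hle⟩ := hk 1
    refine ⟨n, hn, hle.trans ?_⟩
    gcongr
    have : (0 : ℝ) < 1 / (k + 1) := by positivity
    linarith

theorem dominatedCocycle_birkhoffSum (hT : Measurable T) {f : α → ℝ} (hf : Measurable f) :
    DominatedCocycle T (birkhoffSum T f) (fun x => |f x|) where
  measurable _ := Finset.measurable_sum _ fun k _ => hf.comp (hT.iterate k)
  subadd m n x := (birkhoffSum_add T f m n x).le
  nonneg _ := abs_nonneg _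
  dominated _ _ := Finset.abs_sum_le_sum_abs _ _

/-- Birkhoff's pointwise ergodic theorem for an ergodic map. -/
theorem ae_tendsto_birkhoffSum_div [IsProbabilityMeasure μ] (hT : Ergodic T μ) {f : α → ℝ}
    (hf : Measurable f) (hfi : Integrable f μ) :
    ∀ᵐ x ∂μ, Tendsto (fun n : ℕ => birkhoffSum T f n x / n) atTop (𝓝 (∫ x, f x ∂μ)) := by
  have key : ∀ f : α → ℝ, Measurable f → Integrable f μ → ∀ b < ∫ x, f x ∂μ,
      ∀ᵐ x ∂μ, ∀ᶠ n : ℕ in atTop, n * b < birkhoffSum T f n x := by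
    intro f hf hfi b hb
    refine (dominatedCocycle_birkhoffSum hT.measurable hf).ae_eventually_lt hT hfi.abs ?_ hb
    refine tendsto_const_nhds.congr' ?_
    filter_upwards [eventually_gt_atTop 0] with n hn
    have hn' : (n : ℝ) ≠ 0 := by positivity
    rw [integral_birkhoffSum hT.toMeasurePreserving hfi, mul_div_cancel_left₀ _ hn']
  have hlow : ∀ᵐ x ∂μ, ∀ k : ℕ, ∀ᶠ n : ℕ in atTop,
      n * ((∫ x, f x ∂μ) - 1 / (k + 1)) < birkhoffSum T f n x :=
    ae_all_iff.2 fun k => key f hf hfi _ (sub_lt_self _ (by positivity))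
  have hupp : ∀ᵐ x ∂μ, ∀ k : ℕ, ∀ᶠ n : ℕ in atTop,
      n * ((∫ x, (-f) x ∂μ) - 1 / (k + 1)) < birkhoffSum T (-f) n x :=
    ae_all_iff.2 fun k => key (-f) hf.neg hfi.neg _ (sub_lt_self _ (by positivity))
  filter_upwards [hlow, hupp] with x h1 h2
  rw [Metric.tendsto_nhds]
  intro ε hε
  obtain ⟨k, hk⟩ := exists_nat_one_div_lt hε
  filter_upwards [h1 k, h2 k, eventually_gt_atTop 0] with n hn1 hn2 hn
  have hn' : (0 : ℝ) < n := by exact_mod_cast hn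
  rw [birkhoffSum_neg] at hn2
  simp only [Pi.neg_apply, integral_neg] at hn2
  rw [Real.dist_eq, abs_lt]
  constructor
  · rw [neg_lt_sub_iff_lt_add, ← sub_lt_iff_lt_add', lt_div_iff₀ hn']
    nlinarith
  · rw [sub_lt_iff_lt_add, div_lt_iff₀ hn']
    nlinarith

theorem DominatedCocycle.sum_shifted_le (hg : DominatedCocycle T g h) (m n : ℕ) (x : α) :
    ∑ i ∈ Finset.range m, g (n + i) x
      ≤ ∑ i ∈ Finset.range m, g i x + birkhoffSum T (g m) n x := by
  induction n with
  | zero => simp [birkhoffSum]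
  | succ n ih =>
    have h1 := Finset.sum_range_succ (fun i => g (n + i) x) m
    have h2 := Finset.sum_range_succ' (fun i => g (n + i) x) m
    have h3 := hg.subadd n m x
    rw [birkhoffSum_succ]
    have h4 : ∀ i, g (n + 1 + i) x = g (n + (i + 1)) x := fun i => by
      congr 1; omega
    simp only [h4, add_zero] at *
    linarith

theorem DominatedCocycle.mul_apply_add_le (hg : DominatedCocycle T g h) (m n : ℕ) (x : α) :
    m * g (n + m) x ≤ ∑ i ∈ Finset.range m, g i x + birkhoffSum T (g m) n x
      + m * (birkhoffSum T h (n + m) x - birkhoffSum T h n x) := by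
  have h1 : ∀ i ∈ Finset.range m, g (n + m) x ≤ g (n + i) x
      + (birkhoffSum T h (n + m) x - birkhoffSum T h n x) := by
    intro i hi
    obtain ⟨k, rfl⟩ := Nat.exists_eq_add_of_le (Finset.mem_range.1 hi).le
    have h2 := hg.subadd (n + i) k x
    have h3 := (abs_le.1 (hg.dominated k (T^[n + i] x))).2
    have h4 := birkhoffSum_add T h (n + i) k x
    have h5 := birkhoffSum_add T h n i x
    have h6 : 0 ≤ birkhoffSum T h i (T^[n] x) := Finset.sum_nonneg fun j _ => hg.nonneg _
    rw [← add_assoc]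
    linarith
  have h2 := Finset.sum_le_sum h1
  rw [Finset.sum_add_distrib] at h2
  simp only [Finset.sum_const, Finset.card_range, nsmul_eq_mul] at h2
  linarith [hg.sum_shifted_le m n x]

theorem tendsto_add_div_of_tendsto_div {u : ℕ → ℝ} {l : ℝ} (m : ℕ)
    (hu : Tendsto (fun n : ℕ => u n / n) atTop (𝓝 l)) :
    Tendsto (fun n : ℕ => u (n + m) / n) atTop (𝓝 l) := by
  have h1 : Tendsto (fun n : ℕ => u (n + m) / (n + m : ℕ)) atTop (𝓝 l) :=
    hu.comp (tendsto_add_atTop_nat m)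
  have h2 : Tendsto (fun n : ℕ => 1 + (m : ℝ) / n) atTop (𝓝 (1 + 0)) :=
    tendsto_const_nhds.add (tendsto_const_div_atTop_nhds_zero_nat _)
  have h3 := h1.mul h2
  rw [add_zero, mul_one] at h3
  refine h3.congr' ?_
  filter_upwards [eventually_gt_atTop 0] with n hn
  have hn' : (0 : ℝ) < n := by exact_mod_cast hn
  have : ((n + m : ℕ) : ℝ) ≠ 0 := by positivity
  field_simp
  push_cast
  ring

/-- The upper half of Kingman's theorem. -/
theorem DominatedCocycle.ae_eventually_gt [IsProbabilityMeasure μ] (hg : DominatedCocycle T g h)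
    (hT : Ergodic T μ) (hhm : Measurable h) (hh : Integrable h μ) {γ : ℝ}
    (hγ : Tendsto (fun n : ℕ => (∫ x, g n x ∂μ) / n) atTop (𝓝 γ)) {b : ℝ} (hb : γ < b) :
    ∀ᵐ x ∂μ, ∀ᶠ n : ℕ in atTop, g n x < n * b := by
  obtain ⟨m, hmb, hm⟩ := ((hγ.eventually_lt_const hb).and (eventually_gt_atTop 0)).exists
  have hm' : (0 : ℝ) < m := by exact_mod_cast hm
  filter_upwards [ae_tendsto_birkhoffSum_div hT (hg.measurable m)
      (hg.integrable hT.toMeasurePreserving hh m),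
    ae_tendsto_birkhoffSum_div hT hhm hh] with x h1 h2
  have h3 : Tendsto (fun n : ℕ => ((∑ i ∈ Finset.range m, g i x) / n
      + birkhoffSum T (g m) n x / n
      + m * (birkhoffSum T h (n + m) x / n - birkhoffSum T h n x / n) - m * (m * b) / n)) atTop
      (𝓝 (0 + (∫ x, g m x ∂μ) + m * ((∫ x, h x ∂μ) - ∫ x, h x ∂μ) - 0)) :=
    (((tendsto_const_div_atTop_nhds_zero_nat _).add h1).add
      (((tendsto_add_div_of_tendsto_div m h2).sub h2).const_mul _)).sub
      (tendsto_const_div_atTop_nhds_zero_nat _)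
  rw [sub_self, mul_zero, add_zero, zero_add, sub_zero] at h3
  rw [div_lt_iff₀ hm'] at hmb
  have h4 : ∀ᶠ n : ℕ in atTop, g (n + m) x < (n + m : ℕ) * b := by
    filter_upwards [h3.eventually_lt_const hmb, eventually_gt_atTop 0] with n h5 hn
    have hn' : (0 : ℝ) < n := by exact_mod_cast hn
    have h6 := hg.mul_apply_add_le m n x
    have h7 := mul_lt_mul_of_pos_right h5 hn'
    have h8 : ((∑ i ∈ Finset.range m, g i x) / n + birkhoffSum T (g m) n x / n
      + m * (birkhoffSum T h (n + m) x / n - birkhoffSum T h n x / n) - m * (m * b) / n) * n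
      = ∑ i ∈ Finset.range m, g i x + birkhoffSum T (g m) n x
      + m * (birkhoffSum T h (n + m) x - birkhoffSum T h n x) - m * (m * b) := by
      field_simp
    rw [h8] at h7
    refine lt_of_mul_lt_mul_left ?_ hm'.le
    push_cast
    linarith
  obtain ⟨N, hN⟩ := eventually_atTop.1 h4
  filter_upwards [eventually_ge_atTop (N + m)] with n hn
  have := hN (n - m) (by omega)
  rwa [Nat.sub_add_cancel (by omega)] at this

/-- Kingman's subadditive ergodic theorem for dominated cocycles over an ergodic map. -/
theorem DominatedCocycle.ae_tendsto [IsProbabilityMeasure μ] (hg : DominatedCocycle T g h)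
    (hT : Ergodic T μ) (hhm : Measurable h) (hh : Integrable h μ) {γ : ℝ}
    (hγ : Tendsto (fun n : ℕ => (∫ x, g n x ∂μ) / n) atTop (𝓝 γ)) :
    ∀ᵐ x ∂μ, Tendsto (fun n : ℕ => g n x / n) atTop (𝓝 γ) := by
  have hlow : ∀ᵐ x ∂μ, ∀ k : ℕ, ∀ᶠ n : ℕ in atTop, n * (γ - 1 / (k + 1)) < g n x :=
    ae_all_iff.2 fun k => hg.ae_eventually_lt hT hh hγ (sub_lt_self _ (by positivity))
  have hupp : ∀ᵐ x ∂μ, ∀ k : ℕ, ∀ᶠ n : ℕ in atTop, g n x < n * (γ + 1 / (k + 1)) :=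
    ae_all_iff.2 fun k => hg.ae_eventually_gt hT hhm hh hγ (lt_add_of_pos_right _ (by positivity))
  filter_upwards [hlow, hupp] with x h1 h2
  rw [Metric.tendsto_nhds]
  intro ε hε
  obtain ⟨k, hk⟩ := exists_nat_one_div_lt hε
  filter_upwards [h1 k, h2 k, eventually_gt_atTop 0] with n hn1 hn2 hn
  have hn' : (0 : ℝ) < n := by exact_mod_cast hn
  rw [Real.dist_eq, abs_lt]
  constructor
  · rw [neg_lt_sub_iff_lt_add, ← sub_lt_iff_lt_add', lt_div_iff₀ hn']
    nlinarith
  · rw [sub_lt_iff_lt_add, div_lt_iff₀ hn']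
    nlinarith

/-- The averages of the means of a dominated cocycle converge. -/
theorem DominatedCocycle.exists_tendsto_integral (hg : DominatedCocycle T g h)
    (hT : MeasurePreserving T μ μ) (hh : Integrable h μ) :
    ∃ γ : ℝ, Tendsto (fun n : ℕ => (∫ x, g n x ∂μ) / n) atTop (𝓝 γ) := by
  have hi := hg.integrable hT hh
  have hsub : Subadditive fun n => ∫ x, g n x ∂μ := by
    intro m n
    have hc : Integrable (fun x => g n (T^[m] x)) μ :=
      (hT.iterate m).integrable_comp_of_integrable (hi n)
    beta_reduce
    rw [← integral_comp_iterate hT (hi n) m, ← integral_add (hi m) hc]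
    exact integral_mono (hi _) ((hi m).add hc) (hg.subadd m n)
  refine ⟨hsub.lim, hsub.tendsto_lim ⟨-∫ x, h x ∂μ, ?_⟩⟩
  rintro _ ⟨n, rfl⟩
  have hh0 : 0 ≤ ∫ x, h x ∂μ := integral_nonneg hg.nonneg
  rcases Nat.eq_zero_or_pos n with rfl | hn
  · simpa using hh0
  have hn' : (0 : ℝ) < n := by exact_mod_cast hn
  have hS : Integrable (birkhoffSum T h n) μ :=
    integrable_finsetSum _ fun k _ => integrable_comp_iterate hT hh k
  have h1 : ∫ x, -birkhoffSum T h n x ∂μ ≤ ∫ x, g n x ∂μ :=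
    integral_mono hS.neg (hi n) fun x => (abs_le.1 (hg.dominated n x)).1
  rw [integral_neg, integral_birkhoffSum hT hh] at h1
  simp only
  rw [le_div_iff₀ hn']
  linarith

/-- The cocycle over the inverse map obtained by reading orbits backwards. -/
theorem DominatedCocycle.reverse {e : α ≃ᵐ α} (hg : DominatedCocycle e g h) :
    DominatedCocycle e.symm (fun n x => g n (e.symm^[n] x)) (fun x => h (e.symm x)) where
  measurable n := (hg.measurable n).comp (e.symm.measurable.iterate n)
  subadd m n x := by
    have h1 := hg.subadd n m (e.symm^[m + n] x)
    have h2 : e^[n] (e.symm^[m + n] x) = e.symm^[m] x := by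
      rw [add_comm m n, Function.iterate_add_apply]
      exact (Function.LeftInverse.iterate e.apply_symm_apply n) _
    rw [h2, add_comm n m, add_comm m n, Function.iterate_add_apply] at h1
    rw [add_comm m n, Function.iterate_add_apply]
    linarith
  nonneg _ := hg.nonneg _
  dominated n x := by
    refine (hg.dominated n _).trans_eq ?_
    simp only [birkhoffSum]
    rw [← Finset.sum_range_reflect]
    refine Finset.sum_congr rfl fun j hj => ?_
    have hj := Finset.mem_range.1 hj
    rw [← Function.iterate_succ_apply' e.symm]
    congr 1
    conv_lhs => rw [show n = (n - 1 - j) + (j + 1) by omega, Function.iterate_add_apply]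
    rw [show n - 1 - j + (j + 1) - 1 - j = n - 1 - j by omega]
    exact (Function.LeftInverse.iterate e.apply_symm_apply _) _

/-- Forward and backward averages of a dominated cocycle converge to the same constant. -/
theorem DominatedCocycle.exists_ae_tendsto [IsProbabilityMeasure μ] {e : α ≃ᵐ α}
    (hg : DominatedCocycle e g h) (he : Ergodic e μ) (hhm : Measurable h) (hh : Integrable h μ) :
    ∃ γ : ℝ, ∀ᵐ x ∂μ, Tendsto (fun n : ℕ => g n x / n) atTop (𝓝 γ) ∧
      Tendsto (fun n : ℕ => g n (e.symm^[n] x) / n) atTop (𝓝 γ) := by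
  obtain ⟨γ, hγ⟩ := hg.exists_tendsto_integral he.toMeasurePreserving hh
  have hs := he.symm
  refine ⟨γ, (hg.ae_tendsto he hhm hh hγ).and
    (hg.reverse.ae_tendsto hs (hhm.comp e.symm.measurable)
      (hs.toMeasurePreserving.integrable_comp_of_integrable hh) ?_)⟩
  refine hγ.congr fun n => ?_
  rw [integral_comp_iterate hs.toMeasurePreserving
    (hg.integrable he.toMeasurePreserving hh n)]

end Kingman

end MaxPlus

namespace MaxPlus

theorem RMax.coe_unbotD {a : RMax} (ha : a ≠ ⊥) : ((a.unbotD 0 : ℝ) : RMax) = a := by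
  lift a to ℝ using ha
  rfl

section Algebra

variable {d : ℕ}

theorem mulVec_le_add (A : Mat d) {v w : Fin d → RMax} {a : RMax} (h : ∀ j, v j ≤ w j + a)
    (i : Fin d) : mulVec A v i ≤ mulVec A w i + a := by
  refine Finset.sup_le fun j hj => ?_
  have h1 : A i j + w j ≤ mulVec A w i :=
    Finset.le_sup (f := fun j => A i j + w j) hj
  calc A i j + v j ≤ A i j + (w j + a) := by gcongr; exact h j
    _ = A i j + w j + a := (add_assoc _ _ _).symm
    _ ≤ _ := by gcongr

theorem add_le_mulVec (A : Mat d) {v w : Fin d → RMax} {a : RMax} (h : ∀ j, w j + a ≤ v j)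
    (i : Fin d) : mulVec A w i + a ≤ mulVec A v i := by
  obtain ⟨j, hj, he⟩ := Finset.exists_mem_eq_sup Finset.univ ⟨i, Finset.mem_univ i⟩
    fun j => A i j + w j
  have h1 : A i j + v j ≤ mulVec A v i :=
    Finset.le_sup (f := fun j => A i j + v j) hj
  calc mulVec A w i + a = A i j + w j + a := by rw [mulVec, he]
    _ = A i j + (w j + a) := add_assoc _ _ _
    _ ≤ A i j + v j := by gcongr; exact h j
    _ ≤ _ := h1

theorem mulVec_ne_bot {A : Mat d} {v : Fin d → RMax} {i : Fin d} (hA : ∃ j, A i j ≠ ⊥)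
    (hv : ∀ j, v j ≠ ⊥) : mulVec A v i ≠ ⊥ := by
  obtain ⟨j, hj⟩ := hA
  have h1 : A i j + v j ≤ mulVec A v i :=
    Finset.le_sup (f := fun j => A i j + v j) (Finset.mem_univ j)
  intro h0
  rw [h0, le_bot_iff, WithBot.add_eq_bot] at h1
  exact h1.elim hj (hv j)

theorem prodZero_add_le (s : ℤ → Mat d) (m : ℤ) (k n : ℕ) {a : RMax}
    (ha : ∀ j, prodZero s m k j ≤ a) (i : Fin d) :
    prodZero s m (k + n) i ≤ prodZero s (m + k) n i + a := by
  induction n generalizing i with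
  | zero => simpa [prodZero] using ha i
  | succ n ih =>
    have := mulVec_le_add (s (m + k + n)) ih i
    rw [← add_assoc]
    simp only [prodZero]
    rwa [Nat.cast_add, ← add_assoc]

theorem le_prodZero_add (s : ℤ → Mat d) (m : ℤ) (k n : ℕ) {a : RMax}
    (ha : ∀ j, a ≤ prodZero s m k j) (i : Fin d) :
    prodZero s (m + k) n i + a ≤ prodZero s m (k + n) i := by
  induction n generalizing i with
  | zero => simpa [prodZero] using ha i
  | succ n ih =>
    have := add_le_mulVec (s (m + k + n)) ih i
    rw [← add_assoc]
    simp only [prodZero]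
    rwa [Nat.cast_add, ← add_assoc]

theorem prodZero_translate (s : ℤ → Mat d) (c m : ℤ) (n : ℕ) :
    prodZero (fun k => s (k + c)) m n = prodZero s (m + c) n := by
  induction n with
  | zero => rfl
  | succ n ih =>
    simp only [prodZero, ih]
    rw [add_right_comm]

/-- The paths of matrices having at least one finite entry on each row. -/
def FiniteRows (s : ℤ → Mat d) : Prop := ∀ n i, ∃ j, s n i j ≠ ⊥

theorem finiteRows_translate (s : ℤ → Mat d) (c : ℤ) :
    FiniteRows (fun k => s (k + c)) ↔ FiniteRows s :=
  ⟨fun h n => by simpa using h (n - c), fun h n => h (n + c)⟩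

theorem FiniteRows.prodZero_ne_bot {s : ℤ → Mat d} (hs : FiniteRows s) (m : ℤ) (n : ℕ)
    (i : Fin d) : prodZero s m n i ≠ ⊥ := by
  induction n generalizing i with
  | zero => exact WithBot.zero_ne_bot
  | succ n ih => exact mulVec_ne_bot (hs _ i) ih

theorem shift_iterate {S : Type*} (s : ℤ → S) (n : ℕ) :
    shift^[n] s = fun k => s (k + n) := by
  induction n with
  | zero => simp
  | succ n ih =>
    rw [Function.iterate_succ_apply', ih]
    funext k
    simp only [shift]
    congr 1
    push_cast
    ring

theorem finiteRows_shift_iterate (s : ℤ → Mat d) (n : ℕ) :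
    FiniteRows (shift^[n] s) ↔ FiniteRows s := by
  rw [shift_iterate, finiteRows_translate]

theorem x_shift_iterate (s : ℤ → Mat d) (m n : ℕ) :
    x (shift^[m] s) n = prodZero s (0 + m) n := by
  rw [shift_iterate, x, prodZero_translate]

/-- The sum of the absolute values of the coordinates of `A(0) ⊗ 0`. -/
noncomputable def stepBound (s : ℤ → Mat d) : ℝ :=
  ∑ i, |(mulVec (s 0) (fun _ => 0) i).unbotD 0|

theorem stepBound_nonneg (s : ℤ → Mat d) : 0 ≤ stepBound s :=
  Finset.sum_nonneg fun _ _ => abs_nonneg _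

theorem abs_le_stepBound (s : ℤ → Mat d) (i : Fin d) :
    |(mulVec (s 0) (fun _ => 0) i).unbotD 0| ≤ stepBound s :=
  Finset.single_le_sum (f := fun i => |(mulVec (s 0) (fun _ => 0) i).unbotD 0|)
    (fun _ _ => abs_nonneg _) (Finset.mem_univ i)

theorem FiniteRows.x_one {s : ℤ → Mat d} (hs : FiniteRows s) (i : Fin d) :
    x s 1 i = ((mulVec (s 0) (fun _ => 0) i).unbotD 0 : ℝ) := by
  rw [RMax.coe_unbotD (mulVec_ne_bot (hs 0 i) fun _ => WithBot.zero_ne_bot)]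
  simp [x, prodZero]

variable [NeZero d]

open Classical in
/-- The real number `max_i x_i(n,0)` on paths with finite rows, and `0` on other paths. -/
noncomputable def topGrowth (n : ℕ) (s : ℤ → Mat d) : ℝ :=
  if FiniteRows s then (maxCoord (x s n)).unbotD 0 else 0

open Classical in
/-- The real number `min_i x_i(n,0)` on paths with finite rows, and `0` on other paths. -/
noncomputable def botGrowth (n : ℕ) (s : ℤ → Mat d) : ℝ :=
  if FiniteRows s then (minCoord (x s n)).unbotD 0 else 0

theorem coe_topGrowth {s : ℤ → Mat d} (hs : FiniteRows s) (n : ℕ) :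
    (topGrowth n s : RMax) = maxCoord (x s n) := by
  rw [topGrowth, if_pos hs]
  refine RMax.coe_unbotD fun h0 => ?_
  have h1 : x s n 0 ≤ maxCoord (x s n) := Finset.le_sup' _ (Finset.mem_univ _)
  rw [h0, le_bot_iff] at h1
  exact hs.prodZero_ne_bot 0 n 0 h1

theorem coe_botGrowth {s : ℤ → Mat d} (hs : FiniteRows s) (n : ℕ) :
    (botGrowth n s : RMax) = minCoord (x s n) := by
  rw [botGrowth, if_pos hs]
  refine RMax.coe_unbotD fun h0 => ?_
  obtain ⟨i, -, hi⟩ := Finset.exists_mem_eq_inf' Finset.univ_nonempty (x s n)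
  exact hs.prodZero_ne_bot 0 n i (hi.symm.trans h0)

theorem x_le_topGrowth {s : ℤ → Mat d} (hs : FiniteRows s) (n : ℕ) (i : Fin d) :
    x s n i ≤ topGrowth n s := by
  rw [coe_topGrowth hs]
  exact Finset.le_sup' _ (Finset.mem_univ _)

theorem botGrowth_le_x {s : ℤ → Mat d} (hs : FiniteRows s) (n : ℕ) (i : Fin d) :
    botGrowth n s ≤ x s n i := by
  rw [coe_botGrowth hs]
  exact Finset.inf'_le _ (Finset.mem_univ _)

theorem topGrowth_le {s : ℤ → Mat d} (hs : FiniteRows s) {n : ℕ} {a : ℝ}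
    (h : ∀ i, x s n i ≤ a) : topGrowth n s ≤ a := by
  rw [← WithBot.coe_le_coe, coe_topGrowth hs]
  exact Finset.sup'_le _ _ fun i _ => h i

theorem le_botGrowth {s : ℤ → Mat d} (hs : FiniteRows s) {n : ℕ} {a : ℝ}
    (h : ∀ i, a ≤ x s n i) : a ≤ botGrowth n s := by
  rw [← WithBot.coe_le_coe, coe_botGrowth hs]
  exact Finset.le_inf' _ _ fun i _ => h i

theorem botGrowth_le_topGrowth (n : ℕ) (s : ℤ → Mat d) : botGrowth n s ≤ topGrowth n s := by
  by_cases hs : FiniteRows s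
  · exact WithBot.coe_le_coe.1 ((botGrowth_le_x hs n 0).trans (x_le_topGrowth hs n 0))
  · simp [botGrowth, topGrowth, hs]

theorem topGrowth_add_le (m n : ℕ) (s : ℤ → Mat d) :
    topGrowth (m + n) s ≤ topGrowth m s + topGrowth n (shift^[m] s) := by
  have hm := finiteRows_shift_iterate s m
  by_cases hs : FiniteRows s
  · refine topGrowth_le hs fun i => ?_
    have h1 := prodZero_add_le s 0 m n (fun j => x_le_topGrowth hs m j) i
    have h2 := x_le_topGrowth (hm.2 hs) n i
    rw [x_shift_iterate] at h2
    rw [add_comm (topGrowth m s), WithBot.coe_add]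
    exact h1.trans (by gcongr)
  · simp [topGrowth, hs, hm]

theorem le_botGrowth_add (m n : ℕ) (s : ℤ → Mat d) :
    botGrowth m s + botGrowth n (shift^[m] s) ≤ botGrowth (m + n) s := by
  have hm := finiteRows_shift_iterate s m
  by_cases hs : FiniteRows s
  · refine le_botGrowth hs fun i => ?_
    have h1 := le_prodZero_add s 0 m n (fun j => botGrowth_le_x hs m j) i
    have h2 := botGrowth_le_x (hm.2 hs) n i
    rw [x_shift_iterate] at h2
    rw [add_comm (botGrowth m s), WithBot.coe_add]
    exact le_trans (by gcongr) h1
  · simp [botGrowth, hs, hm]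

theorem topGrowth_zero (s : ℤ → Mat d) : topGrowth 0 s ≤ 0 := by
  by_cases hs : FiniteRows s
  · exact topGrowth_le hs fun i => le_rfl
  · simp [topGrowth, hs]

theorem botGrowth_zero (s : ℤ → Mat d) : 0 ≤ botGrowth 0 s := by
  by_cases hs : FiniteRows s
  · exact le_botGrowth hs fun i => le_rfl
  · simp [botGrowth, hs]

theorem topGrowth_one_le (s : ℤ → Mat d) : topGrowth 1 s ≤ stepBound s := by
  by_cases hs : FiniteRows s
  · refine topGrowth_le hs fun i => ?_
    rw [hs.x_one, WithBot.coe_le_coe]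
    exact (abs_le.1 (abs_le_stepBound s i)).2
  · simpa [topGrowth, hs] using stepBound_nonneg s

theorem neg_le_botGrowth_one (s : ℤ → Mat d) : -stepBound s ≤ botGrowth 1 s := by
  by_cases hs : FiniteRows s
  · refine le_botGrowth hs fun i => ?_
    rw [hs.x_one, WithBot.coe_le_coe]
    exact (abs_le.1 (abs_le_stepBound s i)).1
  · simpa [botGrowth, hs] using stepBound_nonneg s

theorem le_birkhoffSum_of_subadd {α : Type*} {T : α → α} {u : ℕ → α → ℝ} {h : α → ℝ}
    (hu : ∀ m n x, u (m + n) x ≤ u m x + u n (T^[m] x)) (h0 : ∀ x, u 0 x ≤ 0)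
    (h1 : ∀ x, u 1 x ≤ h x) (n : ℕ) (x : α) : u n x ≤ birkhoffSum T h n x := by
  induction n with
  | zero => simpa [birkhoffSum] using h0 x
  | succ n ih =>
    rw [birkhoffSum_succ]
    exact (hu n 1 x).trans (add_le_add ih (h1 _))

theorem topGrowth_le_birkhoffSum (n : ℕ) (s : ℤ → Mat d) :
    topGrowth n s ≤ birkhoffSum shift stepBound n s :=
  le_birkhoffSum_of_subadd topGrowth_add_le topGrowth_zero topGrowth_one_le n s

theorem neg_botGrowth_le_birkhoffSum (n : ℕ) (s : ℤ → Mat d) :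
    -botGrowth n s ≤ birkhoffSum shift stepBound n s :=
  le_birkhoffSum_of_subadd (u := fun n s => -botGrowth n s)
    (fun m n s => by linarith [le_botGrowth_add m n s])
    (fun s => by linarith [botGrowth_zero s])
    (fun s => by linarith [neg_le_botGrowth_one s]) n s

end Algebra

section Measurability

theorem RMax.measurable_toEReal : Measurable RMax.toEReal := comap_measurable _

theorem measurable_of_toEReal {α : Type*} [MeasurableSpace α] {f : α → RMax}
    (hf : Measurable fun a => (f a).toEReal) : Measurable f :=
  measurable_comap_iff.2 hf

theorem RMax.toEReal_bot : RMax.toEReal ⊥ = ⊥ := rfl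

theorem RMax.toEReal_coe (r : ℝ) : RMax.toEReal r = r := rfl

theorem RMax.toEReal_add (a b : RMax) : (a + b).toEReal = a.toEReal + b.toEReal := by
  induction a using WithBot.recBotCoe with
  | bot => simp [toEReal_bot]
  | coe a =>
    induction b using WithBot.recBotCoe with
    | bot => simp [toEReal_bot]
    | coe b => rw [← WithBot.coe_add]; simp only [toEReal_coe, EReal.coe_add]

theorem RMax.toEReal_mono : Monotone RMax.toEReal := by
  intro a b hab
  induction a using WithBot.recBotCoe with
  | bot => simp [toEReal_bot]
  | coe a =>
    induction b using WithBot.recBotCoe with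
    | bot => simp at hab
    | coe b => simpa [toEReal_coe] using hab

theorem RMax.unbotD_eq_toReal (a : RMax) : a.unbotD 0 = a.toEReal.toReal := by
  induction a using WithBot.recBotCoe with
  | bot => simp [toEReal_bot]
  | coe a => simp [toEReal_coe]

variable {d : ℕ}

theorem toEReal_mulVec (A : Mat d) (v : Fin d → RMax) (i : Fin d) :
    (mulVec A v i).toEReal = Finset.univ.sup fun j => (A i j).toEReal + (v j).toEReal := by
  rw [mulVec, Finset.apply_sup_eq_sup_comp_of_linearOrder _ RMax.toEReal_mono RMax.toEReal_bot]
  simp only [Function.comp_def, RMax.toEReal_add]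

theorem measurable_mulVec {α : Type*} [MeasurableSpace α] {A : α → Mat d}
    {v : α → Fin d → RMax} (hA : Measurable A) (hv : ∀ j, Measurable fun a => v a j)
    (i : Fin d) : Measurable fun a => mulVec (A a) (v a) i := by
  refine measurable_of_toEReal ?_
  simp only [toEReal_mulVec]
  have : Measurable (Finset.univ.sup fun (j : Fin d) (a : α) =>
      (A a i j).toEReal + (v a j).toEReal) := by
    refine Finset.sup_induction measurable_const (fun _ h₁ _ h₂ => h₁.sup h₂) fun j _ => ?_
    have hAij : Measurable fun a => A a i j :=
      (measurable_pi_apply j).comp ((measurable_pi_apply i).comp hA)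
    exact (RMax.measurable_toEReal.comp hAij).add (RMax.measurable_toEReal.comp (hv j))
  convert this using 2
  simp [Finset.sup_apply]

theorem measurable_prodZero (m : ℤ) (n : ℕ) (i : Fin d) :
    Measurable fun s : ℤ → Mat d => prodZero s m n i := by
  induction n generalizing i with
  | zero => exact measurable_const
  | succ n ih => exact measurable_mulVec (measurable_pi_apply (m + n)) ih i

theorem measurableSet_finiteRows : MeasurableSet {s : ℤ → Mat d | FiniteRows s} := by
  have : {s : ℤ → Mat d | FiniteRows s} = ⋂ n, ⋂ i, ⋃ j, {s | (s n i j).toEReal ≠ ⊥} := by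
    ext s
    simp only [FiniteRows, Set.mem_ofPred_eq, Set.mem_iInter, Set.mem_iUnion]
    refine forall_congr' fun n => forall_congr' fun i => exists_congr fun j => ?_
    rw [not_iff_not]
    induction s n i j using WithBot.recBotCoe with
    | bot => simp [RMax.toEReal_bot]
    | coe r => simp [RMax.toEReal_coe]
  rw [this]
  refine .iInter fun n => .iInter fun i => .iUnion fun j => ?_
  have : Measurable fun s : ℤ → Mat d => (s n i j).toEReal :=
    RMax.measurable_toEReal.comp ((measurable_pi_apply j).comp
      ((measurable_pi_apply i).comp (measurable_pi_apply n)))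
  exact this (measurableSet_singleton ⊥).compl

theorem measurable_stepBound : Measurable (stepBound : (ℤ → Mat d) → ℝ) := by
  refine Finset.measurable_sum _ fun i _ => ?_
  have : Measurable fun s : ℤ → Mat d => (mulVec (s 0) (fun _ => 0) i).unbotD 0 := by
    simp only [RMax.unbotD_eq_toReal]
    exact (RMax.measurable_toEReal.comp
      (measurable_mulVec (measurable_pi_apply (0 : ℤ)) (fun _ => measurable_const) i)).ereal_toReal
  exact this.abs

/-- The shift as a measurable equivalence. -/
def shiftEquiv (S : Type*) [MeasurableSpace S] : (ℤ → S) ≃ᵐ (ℤ → S) where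
  toFun := shift
  invFun s n := s (n - 1)
  left_inv s := by funext n; simp [shift]
  right_inv s := by funext n; simp [shift]
  measurable_toFun := measurable_pi_lambda _ fun n => measurable_pi_apply (n + 1)
  measurable_invFun := measurable_pi_lambda _ fun n => measurable_pi_apply (n - 1)

theorem shiftEquiv_symm_iterate {S : Type*} [MeasurableSpace S] (s : ℤ → S) (n : ℕ) :
    (shiftEquiv S).symm^[n] s = fun k => s (k + -n) := by
  induction n with
  | zero => simp
  | succ n ih =>
    rw [Function.iterate_succ_apply', ih]
    funext k
    change s (k - 1 + -n) = _
    congr 1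
    push_cast
    ring

theorem x_shiftEquiv_symm_iterate (s : ℤ → Mat d) (n : ℕ) :
    x ((shiftEquiv (Mat d)).symm^[n] s) n = y s n := by
  rw [shiftEquiv_symm_iterate, x, prodZero_translate, y, zero_add]

theorem finiteRows_shiftEquiv_symm_iterate (s : ℤ → Mat d) (n : ℕ) :
    FiniteRows ((shiftEquiv (Mat d)).symm^[n] s) ↔ FiniteRows s := by
  rw [shiftEquiv_symm_iterate, finiteRows_translate]

variable [NeZero d]

theorem measurable_topGrowth (n : ℕ) : Measurable (topGrowth n : (ℤ → Mat d) → ℝ) := by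
  refine Measurable.ite measurableSet_finiteRows ?_ measurable_const
  simp only [RMax.unbotD_eq_toReal]
  refine Measurable.ereal_toReal ?_
  have : Measurable (Finset.univ.sup' Finset.univ_nonempty fun (i : Fin d) (s : ℤ → Mat d) =>
      (x s n i).toEReal) :=
    Finset.measurable_sup' _ fun i _ => RMax.measurable_toEReal.comp (measurable_prodZero 0 n i)
  convert this using 2 with s
  rw [Finset.sup'_apply, maxCoord, Finset.apply_sup'_eq_sup'_comp (g := RMax.toEReal)]
  · rfl
  · exact fun a b => RMax.toEReal_mono.map_sup a b

theorem measurable_botGrowth (n : ℕ) : Measurable (botGrowth n : (ℤ → Mat d) → ℝ) := by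
  refine Measurable.ite measurableSet_finiteRows ?_ measurable_const
  simp only [RMax.unbotD_eq_toReal]
  refine Measurable.ereal_toReal ?_
  have : Measurable (Finset.univ.inf' Finset.univ_nonempty fun (i : Fin d) (s : ℤ → Mat d) =>
      (x s n i).toEReal) :=
    Finset.inf'_induction _ _ (fun _ h₁ _ h₂ => h₁.inf h₂) fun i _ => RMax.measurable_toEReal.comp (measurable_prodZero 0 n i)
  convert this using 2 with s
  rw [Finset.inf'_apply, minCoord, Finset.apply_inf'_eq_inf'_comp (g := RMax.toEReal)]
  · rfl
  · exact fun a b => RMax.toEReal_mono.map_inf a b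

theorem dominatedCocycle_topGrowth :
    DominatedCocycle (shiftEquiv (Mat d)) topGrowth (stepBound : (ℤ → Mat d) → ℝ) where
  measurable := measurable_topGrowth
  subadd := topGrowth_add_le
  nonneg := stepBound_nonneg
  dominated n s := abs_le.2
    ⟨neg_le.1 ((neg_le_neg (botGrowth_le_topGrowth n s)).trans
      (neg_botGrowth_le_birkhoffSum n s)), topGrowth_le_birkhoffSum n s⟩

theorem dominatedCocycle_neg_botGrowth :
    DominatedCocycle (shiftEquiv (Mat d)) (fun n s => -botGrowth n s)
      (stepBound : (ℤ → Mat d) → ℝ) where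
  measurable n := (measurable_botGrowth n).neg
  subadd m n s := by
    have := le_botGrowth_add m n s
    change -botGrowth (m + n) s ≤ -botGrowth m s + -botGrowth n (shift^[m] s)
    linarith
  nonneg := stepBound_nonneg
  dominated n s := abs_le.2
    ⟨neg_le_neg ((botGrowth_le_topGrowth n s).trans (topGrowth_le_birkhoffSum n s)),
      neg_botGrowth_le_birkhoffSum n s⟩

theorem tendsto_avg {u : ℕ → ℝ} {γ : ℝ} (hu : Tendsto (fun n : ℕ => u n / n) atTop (𝓝 γ)) :
    Tendsto (fun n : ℕ => avg n (u n)) atTop (𝓝 (γ : EReal)) := by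
  refine ((continuous_coe_real_ereal.tendsto γ).comp hu).congr fun n => ?_
  rw [avg, RMax.toEReal_coe, ← EReal.coe_mul, Function.comp_apply, div_eq_mul_inv, one_div,
    mul_comm]

end Measurability

end MaxPlus

open MaxPlus in
theorem vincent_top_bottom_exponents
    {d : ℕ} [NeZero d] {Ω : Type*} [MeasurableSpace Ω] (μ : Measure Ω) [IsProbabilityMeasure μ]
    (A : ℤ → Ω → MaxPlus.Mat d) (hA : ∀ n, Measurable (A n))
    (hstat : MaxPlus.StationaryErgodic A μ)
    (hrow : ∀ n, ∀ᵐ ω ∂μ, ∀ i, ∃ j, A n ω i j ≠ ⊥)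
    (hint : ∀ i, MaxPlus.IntegrableRMax (fun ω => MaxPlus.mulVec (A 0 ω) (fun _ => 0) i) μ) :
    ∃ γ γb : ℝ, ∀ᵐ ω ∂μ,
      Tendsto (fun n : ℕ => MaxPlus.avg n (MaxPlus.maxCoord (MaxPlus.x (fun k => A k ω) n)))
        atTop (𝓝 (γ : EReal)) ∧
      Tendsto (fun n : ℕ => MaxPlus.avg n (MaxPlus.maxCoord (MaxPlus.y (fun k => A k ω) n)))
        atTop (𝓝 (γ : EReal)) ∧
      Tendsto (fun n : ℕ => MaxPlus.avg n (MaxPlus.minCoord (MaxPlus.x (fun k => A k ω) n)))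
        atTop (𝓝 (γb : EReal)) ∧
      Tendsto (fun n : ℕ => MaxPlus.avg n (MaxPlus.minCoord (MaxPlus.y (fun k => A k ω) n)))
        atTop (𝓝 (γb : EReal)) := by
  have hX : Measurable fun ω n => A n ω := measurable_pi_lambda _ hA
  have : IsProbabilityMeasure (μ.map fun ω n => A n ω) :=
    Measure.isProbabilityMeasure_map hX.aemeasurable
  have he : Ergodic (shiftEquiv (Mat d)) (μ.map fun ω n => A n ω) := hstat
  have hstep : Integrable stepBound (μ.map fun ω n => A n ω) := by
    rw [integrable_map_measure measurable_stepBound.aestronglyMeasurable hX.aemeasurable]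
    change Integrable (fun ω => ∑ i, |(mulVec (A 0 ω) (fun _ => 0) i).unbotD 0|) μ
    refine integrable_finsetSum _ fun i _ => ?_
    obtain ⟨f, hf, hfe⟩ := hint i
    refine hf.abs.congr ?_
    filter_upwards [hfe] with ω hω
    rw [hω, WithBot.unbotD_coe]
  obtain ⟨γ, hγ⟩ :=
    dominatedCocycle_topGrowth.exists_ae_tendsto he measurable_stepBound hstep
  obtain ⟨γb, hγb⟩ :=
    dominatedCocycle_neg_botGrowth.exists_ae_tendsto he measurable_stepBound hstep
  refine ⟨γ, -γb, ?_⟩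
  filter_upwards [ae_of_ae_map hX.aemeasurable hγ, ae_of_ae_map hX.aemeasurable hγb,
    ae_all_iff.2 hrow] with ω h1 h2 hs
  have hs' : FiniteRows fun n => A n ω := hs
  have hsn := fun n => (finiteRows_shiftEquiv_symm_iterate (fun n => A n ω) n).2 hs'
  have h2x : Tendsto (fun n : ℕ => botGrowth n (fun k => A k ω) / n) atTop (𝓝 (-γb)) := by
    simpa only [neg_div, neg_neg] using h2.1.neg
  have h2y : Tendsto (fun n : ℕ =>
      botGrowth n ((shiftEquiv (Mat d)).symm^[n] fun k => A k ω) / n) atTop (𝓝 (-γb)) := by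
    simpa only [neg_div, neg_neg] using h2.2.neg
  refine ⟨?_, ?_, ?_, ?_⟩
  · simpa only [coe_topGrowth hs'] using tendsto_avg h1.1
  · simpa only [coe_topGrowth (hsn _), x_shiftEquiv_symm_iterate] using tendsto_avg h1.2
  · simpa only [coe_botGrowth hs'] using tendsto_avg h2x
  · simpa only [coe_botGrowth (hsn _), x_shiftEquiv_symm_iterate] using tendsto_avg h2y
end
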